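/- arXiv:1808.00634 — 7 statements merged into one kernel-verified Lean document; each statement's English description precedes it below -/
import Mathlib

section
/- For every n ≥ 1, every group homomorphism χ from the Houghton group H_n to the additive group of real numbers ℝ is a real linear combination of χ_1,…,χ_n: there exist real numbers a_1,…,a_n (and one may take a_n = 0) such that χ(η) = a_1·χ_1(η) + ⋯ + a_n·χ_n(η) for every η ∈ H_n. -/
/-- A map `f : {1,…,n} × ℕ → {1,…,n} × ℕ` is an *eventual translation* if for each
`i` there exist `m_i ∈ ℤ` and `N_i ∈ ℕ` with `f (i, x) = (i, x + m_i)` for all `x ≥ N_i`. -/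
def IsEvTrans {n : ℕ} (f : Fin n × ℕ → Fin n × ℕ) : Prop :=
  ∀ i : Fin n, ∃ m : ℤ, ∃ N : ℕ, ∀ x : ℕ, N ≤ x →
    (f (i, x)).1 = i ∧ ((f (i, x)).2 : ℤ) = (x : ℤ) + m

lemma IsEvTrans.id {n : ℕ} : IsEvTrans (id : Fin n × ℕ → Fin n × ℕ) :=
  fun i => ⟨0, 0, fun x _ => by simp⟩

lemma IsEvTrans.comp {n : ℕ} {f g : Fin n × ℕ → Fin n × ℕ}
    (hf : IsEvTrans f) (hg : IsEvTrans g) : IsEvTrans (f ∘ g) := by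
  intro i
  obtain ⟨m₁, N₁, h₁⟩ := hg i
  obtain ⟨m₂, N₂, h₂⟩ := hf i
  refine ⟨m₁ + m₂, max N₁ ((N₂ : ℤ) - m₁).toNat, fun x hx => ?_⟩
  have hx₁ : N₁ ≤ x := le_trans (le_max_left _ _) hx
  obtain ⟨hg1, hg2⟩ := h₁ x hx₁
  have hgix : g (i, x) = (i, (g (i, x)).2) := Prod.ext hg1 rfl
  have hxa : ((N₂ : ℤ) - m₁).toNat ≤ x := le_trans (le_max_right _ _) hx
  have hxb : (N₂ : ℤ) - m₁ ≤ ((((N₂ : ℤ) - m₁).toNat : ℤ)) := Int.self_le_toNat _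
  have hyN : N₂ ≤ (g (i, x)).2 := by
    have : (N₂ : ℤ) ≤ ((g (i, x)).2 : ℤ) := by omega
    exact_mod_cast this
  obtain ⟨hf1, hf2⟩ := h₂ (g (i, x)).2 hyN
  constructor
  · show (f (g (i, x))).1 = i
    rw [hgix]; exact hf1
  · show ((f (g (i, x))).2 : ℤ) = (x : ℤ) + (m₁ + m₂)
    rw [hgix, hf2, hg2]; ring

lemma IsEvTrans.inv {n : ℕ} {f : Equiv.Perm (Fin n × ℕ)} (hf : IsEvTrans ⇑f) :
    IsEvTrans ⇑f.symm := by
  intro i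
  obtain ⟨m, N, h⟩ := hf i
  refine ⟨-m, ((N : ℤ) + m).toNat, fun y hy => ?_⟩
  have hy' : (N : ℤ) + m ≤ (y : ℤ) :=
    le_trans (Int.self_le_toNat _) (by exact_mod_cast hy)
  set x := ((y : ℤ) - m).toNat with hxdef
  have hx : (x : ℤ) = (y : ℤ) - m := Int.toNat_of_nonneg (by omega)
  have hxN : N ≤ x := by omega
  obtain ⟨h1, h2⟩ := h x hxN
  have hfx : f (i, x) = (i, y) := by
    have h3 : ((f (i, x)).2 : ℤ) = (y : ℤ) := by rw [h2]; omega
    exact Prod.ext h1 (by exact_mod_cast h3)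
  have hsymm : f.symm (i, y) = (i, x) := by rw [← hfx]; exact f.symm_apply_apply _
  rw [hsymm]
  exact ⟨rfl, by omega⟩

/-- The Houghton group `H_n`, as the subgroup of `Equiv.Perm (Fin n × ℕ)` consisting
of the eventual translations. -/
def Houghton (n : ℕ) : Subgroup (Equiv.Perm (Fin n × ℕ)) where
  carrier := {η | IsEvTrans ⇑η}
  one_mem' := IsEvTrans.id
  mul_mem' := fun ha hb => IsEvTrans.comp ha hb
  inv_mem' := fun ha => IsEvTrans.inv ha

/-- The monoid `M_n` of injective eventual translations, as a submonoid of
`Function.End (Fin n × ℕ)` (whose multiplication is composition). -/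
def Mmon (n : ℕ) : Submonoid (Function.End (Fin n × ℕ)) where
  carrier := {f | Function.Injective f ∧ IsEvTrans f}
  one_mem' := ⟨fun _ _ h => h, IsEvTrans.id⟩
  mul_mem' := fun ha hb => ⟨ha.1.comp hb.1, IsEvTrans.comp ha.2 hb.2⟩

open Classical in
/-- `χ_i(f)` : the unique integer `m` such that `f (i, x) = (i, x + m)` for all
sufficiently large `x` (or junk value `0` if no such integer exists). -/
noncomputable def chiF (n : ℕ) (i : Fin n) (f : Fin n × ℕ → Fin n × ℕ) : ℤ :=
  if h : ∃ m : ℤ, ∃ N : ℕ, ∀ x : ℕ, N ≤ x →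
      (f (i, x)).1 = i ∧ ((f (i, x)).2 : ℤ) = (x : ℤ) + m
  then h.choose else 0

def IsTr {n : ℕ} (f : Fin n × ℕ → Fin n × ℕ) (i : Fin n) (m : ℤ) : Prop :=
  ∃ N : ℕ, ∀ x : ℕ, N ≤ x → (f (i, x)).1 = i ∧ ((f (i, x)).2 : ℤ) = (x : ℤ) + m

lemma chiF_eq {n : ℕ} {f : Fin n × ℕ → Fin n × ℕ} {i : Fin n} {m : ℤ} (h : IsTr f i m) :
    chiF n i f = m := by
  have h' : ∃ m : ℤ, IsTr f i m := ⟨m, h⟩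
  have e : chiF n i f = h'.choose := by
    unfold chiF
    exact dif_pos h'
  rw [e]
  obtain ⟨N, hN⟩ := h
  obtain ⟨M, hM⟩ := h'.choose_spec
  have h1 := (hN (max N M) (le_max_left _ _)).2
  have h2 := (hM (max N M) (le_max_right _ _)).2
  omega

lemma chiF_spec {n : ℕ} (η : Houghton n) (i : Fin n) :
    IsTr (⇑(η : Equiv.Perm (Fin n × ℕ))) i (chiF n i ⇑(η : Equiv.Perm (Fin n × ℕ))) := by
  obtain ⟨m, hm⟩ := η.2 i
  rw [chiF_eq (m := m) hm]
  exact hm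

lemma IsTr.comp {n : ℕ} {f g : Fin n × ℕ → Fin n × ℕ} {i : Fin n} {m₁ m₂ : ℤ}
    (hf : IsTr f i m₂) (hg : IsTr g i m₁) : IsTr (f ∘ g) i (m₂ + m₁) := by
  obtain ⟨N₁, h₁⟩ := hg
  obtain ⟨N₂, h₂⟩ := hf
  refine ⟨max N₁ ((N₂ : ℤ) - m₁).toNat, fun x hx => ?_⟩
  obtain ⟨hg1, hg2⟩ := h₁ x (by omega)
  have hgix : g (i, x) = (i, (g (i, x)).2) := Prod.ext hg1 rfl
  obtain ⟨hf1, hf2⟩ := h₂ (g (i, x)).2 (by omega)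
  rw [Function.comp_apply, hgix]
  exact ⟨hf1, by omega⟩

lemma chiF_mul {n : ℕ} (η ψ : Houghton n) (i : Fin n) :
    chiF n i ⇑((η * ψ : Houghton n) : Equiv.Perm (Fin n × ℕ)) =
      chiF n i ⇑(η : Equiv.Perm (Fin n × ℕ)) + chiF n i ⇑(ψ : Equiv.Perm (Fin n × ℕ)) :=
  chiF_eq ((chiF_spec η i).comp (chiF_spec ψ i))

/-- uniform version -/
lemma chiF_unif {n : ℕ} (η : Houghton n) : ∃ N : ℕ, ∀ i : Fin n, ∀ x : ℕ, N ≤ x →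
    ((η : Equiv.Perm (Fin n × ℕ)) (i, x)).1 = i ∧
    (((η : Equiv.Perm (Fin n × ℕ)) (i, x)).2 : ℤ) =
      (x : ℤ) + chiF n i ⇑(η : Equiv.Perm (Fin n × ℕ)) := by
  choose N hN using fun i => chiF_spec η i
  exact ⟨Finset.univ.sup N, fun i x hx =>
    hN i x (le_trans (Finset.le_sup (Finset.mem_univ i)) hx)⟩

lemma chiF_sum {n : ℕ} (η : Houghton n) :
    ∑ i, chiF n i ⇑(η : Equiv.Perm (Fin n × ℕ)) = 0 := by
  obtain ⟨N, hN⟩ := chiF_unif η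
  set c : Fin n → ℤ := fun i => chiF n i ⇑(η : Equiv.Perm (Fin n × ℕ)) with hc
  have hpos : ∀ i, 0 ≤ (N : ℤ) + c i := fun i => by
    have := (hN i N le_rfl).2
    simp only [hc]
    omega
  let A : Finset (Σ _ : Fin n, ℕ) := Finset.univ.sigma fun _ => Finset.range N
  let B : Finset (Σ _ : Fin n, ℕ) := Finset.univ.sigma fun i => Finset.range ((N : ℤ) + c i).toNat
  have hcard : A.card = B.card := by
    refine Finset.card_bij'
      (fun p _ => ⟨((η : Equiv.Perm (Fin n × ℕ)) (p.1, p.2)).1,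
        ((η : Equiv.Perm (Fin n × ℕ)) (p.1, p.2)).2⟩)
      (fun p _ => ⟨((η : Equiv.Perm (Fin n × ℕ)).symm (p.1, p.2)).1,
        ((η : Equiv.Perm (Fin n × ℕ)).symm (p.1, p.2)).2⟩) ?_ ?_ ?_ ?_
    · rintro ⟨i, x⟩ hp
      simp only [A, B, Finset.mem_sigma, Finset.mem_univ, true_and, Finset.mem_range] at hp ⊢
      by_contra hcon
      generalize hq : (η : Equiv.Perm (Fin n × ℕ)) (i, x) = q at hcon
      obtain ⟨j, y⟩ := q
      simp only at hcon
      have hj := hpos j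
      have h1 := hN j ((y : ℤ) - c j).toNat (by omega)
      have h2 : (η : Equiv.Perm (Fin n × ℕ)) (j, ((y : ℤ) - c j).toNat) = (j, y) := by
        refine Prod.ext h1.1 ?_
        have := h1.2
        change _ = _ + c j at this
        simp only
        omega
      have h3 := (η : Equiv.Perm (Fin n × ℕ)).injective (hq.trans h2.symm)
      have h4 := congrArg Prod.snd h3
      simp only at h4
      omega
    · rintro ⟨i, x⟩ hp
      simp only [A, B, Finset.mem_sigma, Finset.mem_univ, true_and, Finset.mem_range] at hp ⊢
      by_contra hcon
      generalize hq : (η : Equiv.Perm (Fin n × ℕ)).symm (i, x) = q at hcon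
      obtain ⟨j, y⟩ := q
      simp only at hcon
      rw [Equiv.symm_apply_eq] at hq
      have h1 := hN j y (by omega)
      rw [← hq] at h1
      simp only at h1
      obtain ⟨rfl, h2⟩ := h1
      change _ = _ + c i at h2
      omega
    · rintro ⟨i, x⟩ hp
      simp
    · rintro ⟨i, x⟩ hp
      simp
  simp only [A, B, Finset.card_sigma, Finset.card_range] at hcard
  have h2 : (∑ i : Fin n, (N : ℤ)) = ∑ i : Fin n, ((N : ℤ) + c i) := by
    have := congrArg (fun k : ℕ => (k : ℤ)) hcard
    simp only [Nat.cast_sum] at this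
    rw [this]
    exact Finset.sum_congr rfl fun i _ => Int.toNat_of_nonneg (hpos i)
  rw [Finset.sum_add_distrib] at h2
  linarith

lemma swap_mem {n : ℕ} (p q : Fin n × ℕ) : Equiv.swap p q ∈ Houghton n := by
  intro i
  refine ⟨0, p.2 + q.2 + 1, fun x hx => ?_⟩
  have h1 : (i, x) ≠ p := by rintro rfl; simp only at hx; omega
  have h2 : (i, x) ≠ q := by rintro rfl; simp only at hx; omega
  rw [Equiv.swap_apply_of_ne_of_ne h1 h2]
  simp

lemma hom_finite {n : ℕ} (χ : ↥(Houghton n) → ℝ)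
    (hχ : ∀ η ψ : ↥(Houghton n), χ (η * ψ) = χ η + χ ψ) (η : Houghton n)
    (h0 : ∀ i, chiF n i ⇑(η : Equiv.Perm (Fin n × ℕ)) = 0) : χ η = 0 := by
  have h1 : χ 1 = 0 := by
    have := hχ 1 1
    rw [mul_one] at this
    linarith
  have hmem : (η : Equiv.Perm (Fin n × ℕ)) ∈
      Subgroup.closure {σ : Equiv.Perm (Fin n × ℕ) | σ.IsSwap} := by
    rw [mem_closure_isSwap']
    obtain ⟨N, hN⟩ := chiF_unif η
    refine ((Set.finite_univ (α := Fin n)).prod (Set.finite_Iio N)).subset ?_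
    rintro ⟨i, x⟩ hx
    simp only [Set.mem_prod, Set.mem_univ, true_and, Set.mem_Iio]
    by_contra hcon
    apply hx
    have := hN i x (by omega)
    rw [h0] at this
    exact Prod.ext this.1 (by have := this.2; simp only [Equiv.Perm.smul_def]; omega)
  have key : ∃ h : (η : Equiv.Perm (Fin n × ℕ)) ∈ Houghton n, χ ⟨η, h⟩ = 0 := by
    refine Subgroup.closure_induction
      (p := fun f _ => ∃ h : f ∈ Houghton n, χ ⟨f, h⟩ = 0) ?_ ?_ ?_ ?_ hmem
    · rintro f ⟨p, q, -, rfl⟩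
      refine ⟨swap_mem p q, ?_⟩
      have h2 := hχ ⟨_, swap_mem p q⟩ ⟨_, swap_mem p q⟩
      have h3 : (⟨_, swap_mem p q⟩ * ⟨_, swap_mem p q⟩ : Houghton n) = 1 :=
        Subtype.ext (Equiv.swap_mul_self p q)
      rw [h3, h1] at h2
      linarith
    · exact ⟨one_mem _, h1⟩
    · rintro f g - - ⟨hf, hf'⟩ ⟨hg, hg'⟩
      refine ⟨mul_mem hf hg, ?_⟩
      have := hχ ⟨f, hf⟩ ⟨g, hg⟩
      rw [hf', hg', add_zero] at this
      exact this
    · rintro f - ⟨hf, hf'⟩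
      refine ⟨inv_mem hf, ?_⟩
      have := hχ ⟨f, hf⟩ ⟨f⁻¹, inv_mem hf⟩
      have h3 : (⟨f, hf⟩ * ⟨f⁻¹, inv_mem hf⟩ : Houghton n) = 1 :=
        Subtype.ext (mul_inv_cancel f)
      rw [h3, h1, hf'] at this
      linarith
  exact key.2

/-- The translation along rays `i` and `l`. -/
def rayTrans {n : ℕ} (l i : Fin n) (h : i ≠ l) : Equiv.Perm (Fin n × ℕ) where
  toFun p := if p.1 = i then (i, p.2 + 1) else
    if p.1 = l then (if p.2 = 0 then (i, 0) else (l, p.2 - 1)) else p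
  invFun p := if p.1 = l then (l, p.2 + 1) else
    if p.1 = i then (if p.2 = 0 then (l, 0) else (i, p.2 - 1)) else p
  left_inv := by
    rintro ⟨j, x⟩
    grind
  right_inv := by
    rintro ⟨j, x⟩
    grind

lemma trans_tr {n : ℕ} (l i : Fin n) (h : i ≠ l) (j : Fin n) :
    IsTr (rayTrans l i h) j (if j = i then 1 else if j = l then -1 else 0) := by
  refine ⟨1, fun x hx => ?_⟩
  simp only [rayTrans, Equiv.coe_fn_mk]
  grind

lemma hom_vanish {n : ℕ} (l : Fin n) (φ : ↥(Houghton n) → ℝ)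
    (hφ : ∀ η ψ : ↥(Houghton n), φ (η * ψ) = φ η + φ ψ)
    (t : Fin n → Houghton n) (ht : ∀ i, φ (t i) = 0)
    (htc : ∀ i, i ≠ l → ∀ j, chiF n j ⇑(t i : Equiv.Perm (Fin n × ℕ)) =
      if j = i then 1 else if j = l then -1 else 0) (η : Houghton n) : φ η = 0 := by
  have φ1 : φ 1 = 0 := by
    have := hφ 1 1
    rw [mul_one] at this
    linarith
  let Φ : Houghton n →* Multiplicative ℝ :=
    { toFun := fun g => Multiplicative.ofAdd (φ g), map_one' := by rw [φ1]; rfl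
      map_mul' := fun a b => by rw [hφ]; rfl }
  have hz : ∀ i (k : ℤ), φ (t i ^ k) = 0 := fun i k => by
    have h1 : Φ (t i) = 1 := by change Multiplicative.ofAdd (φ (t i)) = 1; rw [ht]; rfl
    have h2 : Φ (t i ^ k) = 1 := by rw [map_zpow, h1, one_zpow]
    exact h2
  have cz : ∀ j (g : Houghton n) (k : ℤ), chiF n j ⇑((g ^ k : Houghton n) : Equiv.Perm (Fin n × ℕ)) =
      k * chiF n j ⇑(g : Equiv.Perm (Fin n × ℕ)) := fun j g k => by
    let C : Houghton n →* Multiplicative ℤ := MonoidHom.mk'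
      (fun g => Multiplicative.ofAdd (chiF n j ⇑(g : Equiv.Perm (Fin n × ℕ))))
      (fun a b => by rw [chiF_mul]; rfl)
    have := map_zpow C g k
    have h2 := congrArg Multiplicative.toAdd this
    rw [toAdd_zpow, smul_eq_mul] at h2
    exact h2
  have main : ∀ s : Finset (Fin n), ∀ η : Houghton n,
      (∀ i, i ∉ s → i ≠ l → chiF n i ⇑(η : Equiv.Perm (Fin n × ℕ)) = 0) → φ η = 0 := by
    intro s
    induction s using Finset.induction_on with
    | empty =>
      intro η h
      refine hom_finite φ hφ η fun i => ?_
      by_cases hi : i = l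
      · have := chiF_sum η
        rw [Finset.sum_eq_single l (fun j _ hj => h j (by simp) hj) (by simp)] at this
        rw [hi, this]
      · exact h i (by simp) hi
    | insert j s hj ih =>
      intro η h
      by_cases hl : j = l
      · exact ih η fun i hi hil => h i (by simp [hi, hl, hil]) hil
      · have := ih (η * t j ^ (-chiF n j ⇑(η : Equiv.Perm (Fin n × ℕ)))) fun i hi hil => by
          rw [chiF_mul, cz, htc j hl]
          by_cases hij : i = j
          · subst hij; simp
          · rw [h i (by simp [hij, hi]) hil]
            simp [hij, hil]
        rw [hφ, hz, add_zero] at this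
        exact this
  exact main Finset.univ η (by simp)

/-- Every group homomorphism `χ : H_n → (ℝ, +)` is a real linear combination of the
`χ_i`, and one may take the last coefficient to be `0`. -/
theorem hom_is_combination_of_chi (n : ℕ) (hn : 1 ≤ n) (χ : ↥(Houghton n) → ℝ)
    (hχ : ∀ η ψ : ↥(Houghton n), χ (η * ψ) = χ η + χ ψ) :
    ∃ a : Fin n → ℝ, a ⟨n - 1, by omega⟩ = 0 ∧
      ∀ η : ↥(Houghton n),
        χ η = ∑ i : Fin n, a i * (chiF n i ⇑(η : Equiv.Perm (Fin n × ℕ)) : ℝ) := by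
  set l : Fin n := ⟨n - 1, by omega⟩ with hl
  let t : Fin n → Houghton n := fun i =>
    if h : i ≠ l then ⟨rayTrans l i h, fun j => ⟨_, trans_tr l i h j⟩⟩ else 1
  have χ1 : χ 1 = 0 := by
    have := hχ 1 1
    rw [mul_one] at this
    linarith
  have htl : t l = 1 := by simp [t]
  have htc : ∀ i, i ≠ l → ∀ j, chiF n j ⇑(t i : Equiv.Perm (Fin n × ℕ)) =
      if j = i then 1 else if j = l then -1 else 0 := fun i hi j => by
    simp only [t, dif_pos hi]
    exact chiF_eq (trans_tr l i hi j)
  have hal : χ (t l) = 0 := by rw [htl, χ1]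
  refine ⟨fun i => χ (t i), hal, fun η => ?_⟩
  have := hom_vanish l (fun η => χ η - ∑ i : Fin n, χ (t i) *
    (chiF n i ⇑(η : Equiv.Perm (Fin n × ℕ)) : ℝ)) ?_ t ?_ htc η
  · linarith
  · intro η ψ
    simp only [chiF_mul, hχ, Int.cast_add, mul_add, Finset.sum_add_distrib]
    ring
  · intro i
    by_cases hi : i = l
    · have h1 : ∀ j, chiF n j ⇑((1 : Houghton n) : Equiv.Perm (Fin n × ℕ)) = 0 := fun j =>
        chiF_eq ⟨0, fun x _ => by simp⟩
      subst hi
      simp only [htl, χ1, h1, Int.cast_zero, mul_zero, Finset.sum_const_zero, sub_zero]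
    · rw [Finset.sum_eq_single i]
      · simp [htc i hi]
      · intro j _ hj
        rw [htc i hi, if_neg hj]
        by_cases hjl : j = l
        · rw [hjl, hal, zero_mul]
        · simp [hjl]
      · simp
end

section
/- For every n ≥ 1 and all φ, φ′ in the monoid M_n, there exists an element η of the Houghton group H_n with φ′ = η ∘ φ if and only if the (finite) complements of the images of φ and φ′ have the same cardinality: |({1,…,n} × ℕ) \ range(φ)| = |({1,…,n} × ℕ) \ range(φ′)|. In other words, the action of H_n on M_n by postcomposition is transitive on each level set of the defect function f(φ) = |({1,…,n} × ℕ) \ range(φ)|. -/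
/-- Sufficiently far points on ray `i` are images of the translates. -/
lemma IsEvTrans.exists_preimage {n : ℕ} {f : Fin n × ℕ → Fin n × ℕ} (hf : IsEvTrans f)
    (i : Fin n) (M : ℕ) : ∃ m : ℤ, ∃ K : ℕ, ∀ y : ℕ, K ≤ y →
      ∃ x : ℕ, M ≤ x ∧ (x : ℤ) = y - m ∧ f (i, x) = (i, y) := by
  obtain ⟨m, N, h⟩ := hf i
  refine ⟨m, ((max N M : ℕ) + m).toNat, fun y hy => ?_⟩
  have hx : ((((y : ℤ) - m).toNat : ℕ) : ℤ) = (y : ℤ) - m := Int.toNat_of_nonneg (by omega)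
  refine ⟨((y : ℤ) - m).toNat, by omega, hx, ?_⟩
  obtain ⟨h1, h2⟩ := h ((y : ℤ) - m).toNat (by omega)
  exact Prod.ext h1 (by simp only; omega)

lemma IsEvTrans.finite_compl_range {n : ℕ} {f : Fin n × ℕ → Fin n × ℕ} (hf : IsEvTrans f) :
    (Set.range f)ᶜ.Finite := by
  choose m K h using fun i => hf.exists_preimage i 0
  have hfin : (⋃ i : Fin n, Set.image (fun y : ℕ => (i, y)) (Set.Iio (K i))).Finite :=
    Set.finite_iUnion fun i => (Set.finite_Iio (K i)).image _
  refine hfin.subset ?_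
  rintro ⟨i, y⟩ hy
  refine Set.mem_iUnion.2 ⟨i, y, ?_, rfl⟩
  by_contra hlt
  obtain ⟨x, -, -, hx⟩ := h i y (by simpa using hlt)
  exact hy ⟨_, hx⟩

lemma exists_perm_comp {α : Type*} {f g : α → α} (hf : Function.Injective f)
    (hg : Function.Injective g) (hff : (Set.range f)ᶜ.Finite) (hgf : (Set.range g)ᶜ.Finite)
    (h : (Set.range f)ᶜ.ncard = (Set.range g)ᶜ.ncard) :
    ∃ η : Equiv.Perm α, ∀ x, η (f x) = g x := by
  classical
  have := hff.to_subtype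
  have := hgf.to_subtype
  have e : ((Set.range f)ᶜ : Set α) ≃ ((Set.range g)ᶜ : Set α) :=
    (Finite.card_eq.1 h).some
  let e₂ := (Equiv.ofInjective f hf).symm.trans (Equiv.ofInjective g hg)
  refine ⟨(Equiv.Set.sumCompl (Set.range f)).symm.trans
    ((Equiv.sumCongr e₂ e).trans (Equiv.Set.sumCompl (Set.range g))), fun x => ?_⟩
  have : (Equiv.Set.sumCompl (Set.range f)).symm (f x) = Sum.inl ⟨f x, x, rfl⟩ :=
    Equiv.Set.sumCompl_symm_apply_of_mem (Set.mem_range_self x)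
  have h2 : (Equiv.ofInjective f hf).symm ⟨f x, x, rfl⟩ = x :=
    Equiv.ofInjective_symm_apply hf x
  simp [this, e₂, h2]

/-- For `φ, φ' ∈ M_n`, there is `η ∈ H_n` with `φ' = η ∘ φ` iff the complements of the
images of `φ` and `φ'` have the same cardinality: the action of `H_n` on `M_n` by
postcomposition is transitive on each level set of `f(φ) = |({1,…,n} × ℕ) ∖ range φ|`. -/
theorem houghton_transitive_on_defect_level_sets (n : ℕ) (hn : 1 ≤ n)
    (f g : Function.End (Fin n × ℕ)) (hf : f ∈ Mmon n) (hg : g ∈ Mmon n) :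
    (∃ η : Equiv.Perm (Fin n × ℕ), η ∈ Houghton n ∧ g = ⇑η ∘ f) ↔
      (Set.range f)ᶜ.ncard = (Set.range g)ᶜ.ncard := by
  constructor
  · rintro ⟨η, -, rfl⟩
    have hr : (Set.range (fun x => η (f x)))ᶜ = Set.image η (Set.range fun x => f x)ᶜ := by
      rw [Set.image_compl_eq η.bijective, ← Set.range_comp]
      rfl
    exact ((congrArg Set.ncard hr).trans (Set.ncard_image_of_injective _ η.injective)).symm
  · intro h
    obtain ⟨η, hη⟩ := exists_perm_comp hf.1 hg.1 hf.2.finite_compl_range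
      hg.2.finite_compl_range h
    refine ⟨η, ?_, funext fun x => (hη x).symm⟩
    intro i
    obtain ⟨m₂, N, h₂⟩ := hg.2 i
    obtain ⟨m₁, K, h₁⟩ := hf.2.exists_preimage i N
    refine ⟨m₂ - m₁, K, fun y hy => ?_⟩
    obtain ⟨x, hx, hxy, hfx⟩ := h₁ y hy
    obtain ⟨h3, h4⟩ := h₂ x hx
    have hy2 : η (i, y) = g (i, x) := (congrArg η hfx).symm.trans (hη (i, x))
    rw [hy2]
    exact ⟨h3, by rw [h4, hxy]; ring⟩
end

section
/- Fix n ≥ 1 and i ∈ {1,…,n}. Consider the graph whose vertex set is M_n and in which φ and ψ are adjacent whenever ψ = φ ∘ t_l or φ = ψ ∘ t_l for some l ∈ {1,…,n}. Let τ_i ∈ H_n ⊆ M_n be the transposition swapping (i,0) and (i,1) and fixing all other points. Then there is no finite path φ_0, φ_1, …, φ_k in this graph with φ_0 = id, φ_k = τ_i, and χ_i(φ_j) ≤ 0 for every 0 ≤ j ≤ k. Equivalently, the identity and τ_i lie in different connected components of the full subgraph on the vertices φ with χ_i(φ) ≤ 0. -/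
/-- The generator `t_l ∈ M_n`, shifting the `l`-th ray by one. -/
def tFun (n : ℕ) (l : Fin n) : Fin n × ℕ → Fin n × ℕ :=
  fun p => if p.1 = l then (p.1, p.2 + 1) else p

/-- If `f` shifts the `i`-th ray by one, then `χ_i(f) = 1`. -/
lemma chiF_eq_one_of_shift {n : ℕ} {i : Fin n} {f : Fin n × ℕ → Fin n × ℕ}
    (hf : ∀ y : ℕ, f (i, y) = (i, y + 1)) : chiF n i f = 1 := by
  have h : ∃ m : ℤ, ∃ N : ℕ, ∀ x : ℕ, N ≤ x →
      (f (i, x)).1 = i ∧ ((f (i, x)).2 : ℤ) = (x : ℤ) + m :=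
    ⟨1, 0, fun x _ => by simp [hf]⟩
  unfold chiF
  rw [dif_pos h]
  obtain ⟨N, hN⟩ := h.choose_spec
  have h2 := (hN N le_rfl).2
  rw [hf] at h2
  push_cast at h2
  linarith

/-- The invariant: `f` restricted to the tail of the `i`-th ray is an exact inverse shift. -/
def TailShift {n : ℕ} (i : Fin n) (f : Fin n × ℕ → Fin n × ℕ) : Prop :=
  ∃ m : ℕ, ∀ y : ℕ, f (i, y + m) = (i, y)

lemma TailShift.comp_t {n : ℕ} {i : Fin n} {f g : Fin n × ℕ → Fin n × ℕ} (l : Fin n)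
    (hf : TailShift i f) (hg : g = f ∘ tFun n l) (hchi : chiF n i g ≤ 0) :
    TailShift i g := by
  obtain ⟨m, hm⟩ := hf
  by_cases hl : i = l
  · subst hl
    have hgx : ∀ x, g (i, x) = f (i, x + 1) := fun x => by simp [hg, tFun]
    cases m with
    | zero =>
      have h1 : chiF n i g = 1 := chiF_eq_one_of_shift fun y => by
        rw [hgx]; exact hm (y + 1)
      omega
    | succ m => exact ⟨m, fun y => by rw [hgx]; exact hm y⟩
  · exact ⟨m, fun y => by simp [hg, tFun, hl, hm]⟩

lemma TailShift.of_comp_t {n : ℕ} {i : Fin n} {f g : Fin n × ℕ → Fin n × ℕ} (l : Fin n)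
    (hf : TailShift i f) (hg : f = g ∘ tFun n l) : TailShift i g := by
  obtain ⟨m, hm⟩ := hf
  by_cases hl : i = l
  · subst hl
    refine ⟨m + 1, fun y => ?_⟩
    have h := hm y
    simpa [hg, tFun, add_assoc] using h
  · refine ⟨m, fun y => ?_⟩
    have h := hm y
    simpa [hg, tFun, hl] using h

/-- In the graph on `M_n` where `φ` and `ψ` are adjacent whenever `ψ = φ ∘ t_l` or
`φ = ψ ∘ t_l`, there is no finite path from the identity to the transposition `τ_i`
(swapping `(i,0)` and `(i,1)`) all of whose vertices `φ_j` satisfy `χ_i(φ_j) ≤ 0`: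
the identity and `τ_i` lie in different `{i}`-blankets. -/
theorem no_nonpositive_path_from_id_to_transposition (n : ℕ) (hn : 1 ≤ n) (i : Fin n) :
    ¬ ∃ (k : ℕ) (p : Fin (k + 1) → Function.End (Fin n × ℕ)),
      p 0 = (id : Fin n × ℕ → Fin n × ℕ) ∧
      p (Fin.last k) = ⇑(Equiv.swap ((i, 0) : Fin n × ℕ) ((i, 1) : Fin n × ℕ)) ∧
      (∀ j : Fin (k + 1), p j ∈ Mmon n ∧ chiF n i (p j) ≤ 0) ∧
      (∀ j : Fin k, ∃ l : Fin n,
        p j.succ = (p j.castSucc) ∘ tFun n l ∨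
        p j.castSucc = (p j.succ) ∘ tFun n l) := by
  rintro ⟨k, p, h0, hlast, hM, hstep⟩
  have key : ∀ j : Fin (k + 1), TailShift i (p j) := by
    intro j
    induction j using Fin.induction with
    | zero => rw [h0]; exact ⟨0, fun y => rfl⟩
    | succ j ih =>
      obtain ⟨l, h | h⟩ := hstep j
      · exact ih.comp_t l h (hM _).2
      · exact ih.of_comp_t l h
  obtain ⟨m, hm⟩ := key (Fin.last k)
  rw [hlast] at hm
  have h2 := hm 2
  rw [Equiv.swap_apply_of_ne_of_ne (by simp) (by simp; omega)] at h2
  have hm0 : m = 0 := by simpa using h2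
  subst hm0
  have h := hm 0
  simp at h
end

section
/- For every n ≥ 2 and every i ∈ {1,…,n}, the kernel of the homomorphism χ_i : H_n → ℤ is not finitely generated. -/
lemma chiF_zero_iff_aux {n : ℕ} (i : Fin n) (f : Fin n × ℕ → Fin n × ℕ) (hf : IsEvTrans f) :
    chiF n i f = 0 ↔ ∃ N : ℕ, ∀ x : ℕ, N ≤ x → f (i, x) = (i, x) := by
  have hs := (hf i).choose_spec
  have he : chiF n i f = (hf i).choose := by
    unfold chiF
    rw [dif_pos (hf i)]
  rw [he]
  obtain ⟨N, hN⟩ := hs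
  constructor
  · intro h0
    rw [h0] at hN
    refine ⟨N, fun x hx => ?_⟩
    obtain ⟨h1, h2⟩ := hN x hx
    exact Prod.ext h1 (by simpa using h2)
  · rintro ⟨M, hM⟩
    obtain ⟨_, h2⟩ := hN (max M N) (le_max_right _ _)
    rw [hM _ (le_max_left _ _)] at h2
    simp only at h2
    omega

theorem ker_chi_not_fg (n : ℕ) (hn : 2 ≤ n) (i : Fin n)
    (K : Subgroup (Equiv.Perm (Fin n × ℕ)))
    (hK : ∀ η : Equiv.Perm (Fin n × ℕ),
      η ∈ K ↔ η ∈ Houghton n ∧ chiF n i ⇑η = 0) :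
    ¬ Group.FG ↥K := by
  intro hfg
  rw [Group.fg_iff_subgroup_fg] at hfg
  obtain ⟨S, hS⟩ := hfg
  have hfix : ∀ η ∈ K, ∃ N : ℕ, ∀ x : ℕ, N ≤ x → η (i, x) = (i, x) := fun η hη =>
    (chiF_zero_iff_aux i _ ((hK η).1 hη).1).1 ((hK η).1 hη).2
  choose! b hb using hfix
  let N := S.sup b
  have hle : K ≤ MulAction.stabilizer (Equiv.Perm (Fin n × ℕ)) ((i, N) : Fin n × ℕ) := by
    rw [← hS, Subgroup.closure_le]
    intro s hs
    have hsK : s ∈ K := hS ▸ Subgroup.subset_closure hs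
    exact hb s hsK N (Finset.le_sup (f := b) hs)
  have hsw : ∀ (j : Fin n) (x : ℕ), N + 2 ≤ x →
      Equiv.swap ((i, N) : Fin n × ℕ) (i, N + 1) (j, x) = (j, x) := by
    intro j x hx
    apply Equiv.swap_apply_of_ne_of_ne
    · intro h
      have := congrArg Prod.snd h
      simp only at this
      omega
    · intro h
      have := congrArg Prod.snd h
      simp only at this
      omega
  have hev : IsEvTrans ⇑(Equiv.swap ((i, N) : Fin n × ℕ) (i, N + 1)) := fun j =>
    ⟨0, N + 2, fun x hx => by rw [hsw j x hx]; simp⟩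
  have hmem : Equiv.swap ((i, N) : Fin n × ℕ) (i, N + 1) ∈ K :=
    (hK _).2 ⟨hev, (chiF_zero_iff_aux i _ hev).2 ⟨N + 2, hsw i⟩⟩
  have h1 : Equiv.swap ((i, N) : Fin n × ℕ) (i, N + 1) (i, N) = (i, N) := hle hmem
  rw [Equiv.swap_apply_left] at h1
  have := congrArg Prod.snd h1
  simp only at this
  omega
end

section
/- For every n ≥ 3, the kernel of the homomorphism χ_1 + 2·χ_2 : H_n → ℤ (sending η to χ_1(η) + 2·χ_2(η)) is finitely generated but not finitely presented. -/
/-- A group is finitely presented if it is the quotient of a finitely generated free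
group by the normal closure of finitely many relators. -/
def GroupFP (G : Type*) [Group G] : Prop :=
  ∃ (m : ℕ) (π : FreeGroup (Fin m) →* G), Function.Surjective π ∧
    ∃ S : Finset (FreeGroup (Fin m)), Subgroup.normalClosure (S : Set (FreeGroup (Fin m))) = π.ker



section AbstractPart

open Filter

/-- Consequence of Britton's lemma. -/
lemma hnn_not_commute {G : Type*} [Group G] {A B : Subgroup G} {φ : A ≃* B} {g h : G}
    (hg : g ∉ A) (hh : h ∉ B) :
    (HNNExtension.t * HNNExtension.of g * HNNExtension.t⁻¹ : HNNExtension G A B φ) *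
      HNNExtension.of h ≠
    HNNExtension.of h * (HNNExtension.t * HNNExtension.of g * HNNExtension.t⁻¹) := by
  intro H
  have hg' : g⁻¹ ∉ A := fun h' => hg (by simpa using A.inv_mem h')
  let w : HNNExtension.NormalWord.ReducedWord G A B :=
    { head := 1
      toList := [(1, g), (-1, h), (1, g⁻¹), (-1, 1)]
      chain := by simp [hg, hh, hg'] }
  have hw : w.prod φ ∈ (HNNExtension.of.range : Subgroup (HNNExtension G A B φ)) := by
    refine ⟨h, ?_⟩
    have : w.prod φ = (HNNExtension.t * HNNExtension.of g * HNNExtension.t⁻¹) *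
        HNNExtension.of h * (HNNExtension.t * HNNExtension.of g * HNNExtension.t⁻¹)⁻¹ := by
      simp [w, HNNExtension.NormalWord.ReducedWord.prod, mul_assoc]
    rw [this, H]; group
  have := HNNExtension.ReducedWord.toList_eq_nil_of_mem_of_range φ w hw
  simp [w] at this

variable {G : Type*} [Group G]

/-- Elements of `M` that `t` conjugates into `M`. -/
def hA (M : Subgroup G) (t : G) : Subgroup M :=
  (M.comap (MulAut.conj t).toMonoidHom).subgroupOf M

lemma mem_hA {M : Subgroup G} {t : G} {g : M} : g ∈ hA M t ↔ t * g * t⁻¹ ∈ M := by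
  simp [hA, Subgroup.mem_subgroupOf]

/-- Conjugation by `t` as an isomorphism of the associated subgroups. -/
def hφ (M : Subgroup G) (t : G) : hA M t ≃* hA M t⁻¹ where
  toFun g := ⟨⟨t * g * t⁻¹, mem_hA.1 g.2⟩, mem_hA.2 (by simp [mul_assoc])⟩
  invFun g := ⟨⟨t⁻¹ * g * t, by simpa using mem_hA.1 g.2⟩, mem_hA.2 (by simp [mul_assoc])⟩
  left_inv g := by ext; simp [mul_assoc]
  right_inv g := by ext; simp [mul_assoc]
  map_mul' g h := by ext; simp [mul_assoc]

/-- The HNN extension with base `M` and stable letter acting like `t`. -/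
abbrev HN (M : Subgroup G) (t : G) := HNNExtension M (hA M t) (hA M t⁻¹) (hφ M t)

open Classical in
/-- The inclusion of `M` into the HNN extension, extended by `1`. -/
noncomputable def hu (M : Subgroup G) (t : G) (g : G) : HN M t :=
  if h : g ∈ M then HNNExtension.of ⟨g, h⟩ else 1

lemma hu_of {M : Subgroup G} {t g : G} (h : g ∈ M) : hu M t g = HNNExtension.of ⟨g, h⟩ := by
  simp [hu, h]

lemma hu_mul {M : Subgroup G} {t g h : G} (hg : g ∈ M) (hh : h ∈ M) :
    hu M t (g * h) = hu M t g * hu M t h := by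
  rw [hu_of hg, hu_of hh, hu_of (M.mul_mem hg hh), ← map_mul]; rfl

lemma hu_one {M : Subgroup G} {t : G} : hu M t 1 = 1 := by
  rw [hu_of M.one_mem]; exact map_one _

lemma hu_inv {M : Subgroup G} {t g : G} (hg : g ∈ M) :
    hu M t g⁻¹ = (hu M t g)⁻¹ := by
  rw [hu_of hg, hu_of (M.inv_mem hg), ← map_inv]; rfl

lemma hu_conj {M : Subgroup G} {t g : G} (hg : g ∈ M) (hg' : t * g * t⁻¹ ∈ M) :
    HNNExtension.t * hu M t g * HNNExtension.t⁻¹ = hu M t (t * g * t⁻¹) := by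
  rw [hu_of hg, hu_of hg']
  exact (HNNExtension.equiv_eq_conj (φ := hφ M t) ⟨⟨g, hg⟩, mem_hA.2 hg'⟩).symm

lemma hu_conj' {M : Subgroup G} {t g : G} (hg : g ∈ M) (hg' : t⁻¹ * g * t ∈ M) :
    HNNExtension.t⁻¹ * hu M t g * HNNExtension.t = hu M t (t⁻¹ * g * t) := by
  have := hu_conj (t := t) hg' (by simpa [mul_assoc] using hg)
  have e : t * (t⁻¹ * g * t) * t⁻¹ = g := by group
  rw [e] at this
  rw [← this]; group

lemma hu_not_commute {M : Subgroup G} {t g h : G} (hg : g ∈ M) (hh : h ∈ M)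
    (hg' : t * g * t⁻¹ ∉ M) (hh' : t⁻¹ * h * t ∉ M) :
    (HNNExtension.t * hu M t g * HNNExtension.t⁻¹) * hu M t h ≠
    hu M t h * (HNNExtension.t * hu M t g * HNNExtension.t⁻¹) := by
  rw [hu_of hg, hu_of hh]
  exact hnn_not_commute (mt mem_hA.1 hg') (fun h' => hh' (by simpa using mem_hA.1 h'))

/-- Conjugation by a nonnegative power within `M`. -/
lemma hu_conj_pow {M : Subgroup G} {t g : G} (p : ℕ)
    (h : ∀ i : ℕ, i ≤ p → t ^ i * g * (t ^ i)⁻¹ ∈ M) :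
    HNNExtension.t ^ p * hu M t g * (HNNExtension.t ^ p)⁻¹ = hu M t (t ^ p * g * (t ^ p)⁻¹) := by
  induction p with
  | zero => simp
  | succ p ih =>
    have e : t ^ (p + 1) * g * (t ^ (p + 1))⁻¹ = t * (t ^ p * g * (t ^ p)⁻¹) * t⁻¹ := by
      rw [pow_succ']; group
    rw [e, ← hu_conj (h p (by omega)) (e ▸ h (p + 1) le_rfl), ← ih (fun i hi => h i (by omega)),
      pow_succ']
    group

lemma hu_conj_pow' {M : Subgroup G} {t g : G} (p : ℕ)
    (h : ∀ i : ℕ, i ≤ p → (t ^ i)⁻¹ * g * t ^ i ∈ M) :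
    (HNNExtension.t ^ p)⁻¹ * hu M t g * HNNExtension.t ^ p = hu M t ((t ^ p)⁻¹ * g * t ^ p) := by
  induction p with
  | zero => simp
  | succ p ih =>
    have e : (t ^ (p + 1))⁻¹ * g * t ^ (p + 1) = t⁻¹ * ((t ^ p)⁻¹ * g * t ^ p) * t := by
      rw [pow_succ]; group
    rw [e, ← hu_conj' (h p (by omega)) (e ▸ h (p + 1) le_rfl), ← ih (fun i hi => h i (by omega)),
      pow_succ]
    group

section Filtration

variable (N : ℕ → Subgroup G) (t : G)

lemma ev_conj (h4 : ∀ g, (∀ᶠ k in atTop, g ∈ N k) → ∀ᶠ k in atTop, t * g * t⁻¹ ∈ N k)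
    (h4' : ∀ g, (∀ᶠ k in atTop, g ∈ N k) → ∀ᶠ k in atTop, t⁻¹ * g * t ∈ N k) (a : ℤ) (g : G)
    (hg : ∀ᶠ k in atTop, g ∈ N k) :
    ∀ᶠ k in atTop, t ^ a * g * (t ^ a)⁻¹ ∈ N k ∧
      HNNExtension.t ^ a * hu (N k) t g * (HNNExtension.t ^ a)⁻¹ =
        hu (N k) t (t ^ a * g * (t ^ a)⁻¹) := by
  induction a with
  | zero => simpa using hg
  | succ a ih =>
    have ih' := h4 _ (ih.mono fun k hk => hk.1)
    filter_upwards [ih, ih'] with k hk hk'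
    have e : t ^ ((a : ℤ) + 1) * g * (t ^ ((a : ℤ) + 1))⁻¹
        = t * (t ^ (a : ℤ) * g * (t ^ (a : ℤ))⁻¹) * t⁻¹ := by
      group
    rw [e, ← hu_conj hk.1 hk', ← hk.2]
    exact ⟨hk', by group⟩
  | pred a ih =>
    have ih' := h4' _ (ih.mono fun k hk => hk.1)
    filter_upwards [ih, ih'] with k hk hk'
    have e : t ^ (-(a : ℤ) - 1) * g * (t ^ (-(a : ℤ) - 1))⁻¹
        = t⁻¹ * (t ^ (-(a : ℤ)) * g * (t ^ (-(a : ℤ)))⁻¹) * t := by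
      group
    rw [e, ← hu_conj' hk.1 hk', ← hk.2]
    exact ⟨hk', by group⟩

/-- The abstract non-finite-presentability criterion. -/
theorem not_fp_of_filtration
    (hmono : Monotone N)
    (h1 : ∀ g : G, ∃ a : ℤ, ∃ k, g * (t ^ a)⁻¹ ∈ N k)
    (h2 : ∀ (a : ℤ) k, t ^ a ∈ N k → a = 0)
    (h4 : ∀ g k, g ∈ N k → t * g * t⁻¹ ∈ N (k + 1))
    (h4' : ∀ g k, g ∈ N k → t⁻¹ * g * t ∈ N (k + 1))
    (τ : G)
    (h5 : ∀ᶠ k in atTop, ∃ p q : ℕ,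
      (∀ i : ℕ, i ≤ p → t ^ i * τ * (t ^ i)⁻¹ ∈ N k) ∧
      (∀ i : ℕ, i ≤ q → (t ^ i)⁻¹ * τ * t ^ i ∈ N k) ∧
      t ^ (p + 1) * τ * (t ^ (p + 1))⁻¹ ∉ N k ∧
      (t ^ (q + 1))⁻¹ * τ * t ^ (q + 1) ∉ N k ∧
      (t ^ (p + 1) * τ * (t ^ (p + 1))⁻¹) * ((t ^ q)⁻¹ * τ * t ^ q) =
        ((t ^ q)⁻¹ * τ * t ^ q) * (t ^ (p + 1) * τ * (t ^ (p + 1))⁻¹))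
    {ι : Type*} [Finite ι] (π : FreeGroup ι →* G) (hπ : Function.Surjective π)
    (S : Finset (FreeGroup ι))
    (hS : Subgroup.normalClosure (S : Set (FreeGroup ι)) = π.ker) : False := by
  have evm : ∀ {g k}, g ∈ N k → ∀ᶠ k in atTop, g ∈ N k := fun {g k} h =>
    (eventually_ge_atTop k).mono fun l hl => hmono hl h
  have H4 : ∀ g, (∀ᶠ k in atTop, g ∈ N k) → ∀ᶠ k in atTop, t * g * t⁻¹ ∈ N k := fun g hg => by
    obtain ⟨k, hk⟩ := hg.exists
    exact evm (h4 g k hk)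
  have H4' : ∀ g, (∀ᶠ k in atTop, g ∈ N k) → ∀ᶠ k in atTop, t⁻¹ * g * t ∈ N k := fun g hg => by
    obtain ⟨k, hk⟩ := hg.exists
    exact evm (h4' g k hk)
  choose a k0 hk0 using h1
  let f : ∀ k, FreeGroup ι →* HN (N k) t := fun k => FreeGroup.lift fun i =>
    hu (N k) t (π (FreeGroup.of i) * (t ^ a (π (FreeGroup.of i)))⁻¹) *
      HNNExtension.t ^ a (π (FreeGroup.of i))
  have key : ∀ w : FreeGroup ι, ∃ (n : G) (b : ℤ), π w = n * t ^ b ∧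
      ∀ᶠ k in atTop, n ∈ N k ∧ f k w = hu (N k) t n * HNNExtension.t ^ b := by
    have kinv : ∀ w : FreeGroup ι, (∃ (n : G) (b : ℤ), π w = n * t ^ b ∧
        ∀ᶠ k in atTop, n ∈ N k ∧ f k w = hu (N k) t n * HNNExtension.t ^ b) →
        ∃ (n : G) (b : ℤ), π w⁻¹ = n * t ^ b ∧
        ∀ᶠ k in atTop, n ∈ N k ∧ f k w⁻¹ = hu (N k) t n * HNNExtension.t ^ b := by
      rintro w ⟨n, b, hw, hev⟩
      have c := ev_conj N t H4 H4' (-b) n⁻¹ (hev.mono fun k hk => (N k).inv_mem hk.1)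
      refine ⟨t ^ (-b) * n⁻¹ * (t ^ (-b))⁻¹, -b, ?_, ?_⟩
      · rw [map_inv, hw]; group
      · filter_upwards [hev, c] with k hk hc
        refine ⟨hc.1, ?_⟩
        rw [← hc.2, map_inv, hk.2, hu_inv hk.1]; group
    intro w
    induction w using FreeGroup.induction_on with
    | C1 => exact ⟨1, 0, by simp, Eventually.of_forall fun k => by simp [hu_one, one_mem]⟩
    | of i =>
      refine ⟨_, a (π (FreeGroup.of i)), ?_, (evm (hk0 (π (FreeGroup.of i)))).mono
        fun k hk => ⟨hk, ?_⟩⟩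
      · group
      · simp [f]
    | inv_of i ih => exact kinv _ ih
    | mul x y hx hy =>
      obtain ⟨n, b, hw, hev⟩ := hx
      obtain ⟨n', b', hw', hev'⟩ := hy
      have c := ev_conj N t H4 H4' b n' (hev'.mono fun k hk => hk.1)
      refine ⟨n * (t ^ b * n' * (t ^ b)⁻¹), b + b', ?_, ?_⟩
      · rw [map_mul, hw, hw']; group
      · filter_upwards [hev, hev', c] with k hk hk' hc
        refine ⟨(N k).mul_mem hk.1 hc.1, ?_⟩
        rw [map_mul, hk.2, hk'.2, hu_mul hk.1 hc.1, ← hc.2]; group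
  -- relators die eventually
  have hrel : ∀ᶠ k in atTop, ∀ r ∈ S, f k r = 1 := by
    rw [Finset.eventually_all]
    intro r hr
    have hr1 : π r = 1 := by
      have : r ∈ π.ker := hS ▸ Subgroup.subset_normalClosure hr
      exact this
    obtain ⟨n, b, hw, hev⟩ := key r
    rw [hr1] at hw
    have hn : t ^ (-b) = n := by rw [zpow_neg, eq_comm, eq_inv_iff_mul_eq_one, hw]
    obtain ⟨k, hk⟩ := hev.exists
    have hb : -b = 0 := h2 _ k (hn ▸ hk.1)
    have hb' : b = 0 := by omega
    subst hb'
    have hn1 : n = 1 := by simpa using hn.symm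
    subst hn1
    filter_upwards [hev] with k hk
    rw [hk.2, hu_one]; simp
  obtain ⟨wt, hwt⟩ := hπ t
  obtain ⟨wτ, hwτ⟩ := hπ τ
  have ht : ∀ᶠ k in atTop, f k wt = HNNExtension.t := by
    obtain ⟨n, b, hw, hev⟩ := key wt
    rw [hwt] at hw
    have hn : t ^ (1 - b) = n := by
      rw [zpow_sub, zpow_one, mul_inv_eq_iff_eq_mul, ← hw]
    obtain ⟨k, hk⟩ := hev.exists
    have hb : 1 - b = 0 := h2 _ k (hn ▸ hk.1)
    have hb' : b = 1 := by omega
    subst hb'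
    have hn1 : n = 1 := by simpa using hn.symm
    subst hn1
    filter_upwards [hev] with k hk
    rw [hk.2, hu_one]; simp
  have hτN : ∀ᶠ k in atTop, τ ∈ N k := by
    filter_upwards [h5] with k ⟨p, q, hp, _⟩
    simpa using hp 0 (Nat.zero_le _)
  have hτ : ∀ᶠ k in atTop, f k wτ = hu (N k) t τ := by
    obtain ⟨n, b, hw, hev⟩ := key wτ
    rw [hwτ] at hw
    have hn : t ^ b = n⁻¹ * τ := by rw [hw]; group
    obtain ⟨k, hk, hk'⟩ := (hev.and hτN).exists
    have hb : b = 0 := h2 _ k (hn ▸ (N k).mul_mem ((N k).inv_mem hk.1) hk')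
    subst hb
    have hn1 : τ = n := by simpa using hw
    subst hn1
    filter_upwards [hev] with k hk
    rw [hk.2]; simp
  obtain ⟨k, hrel, ht, hτ, p, q, hp, hq, hp', hq', hcomm⟩ :=
    (hrel.and (ht.and (hτ.and h5))).exists
  have hker : π.ker ≤ (f k).ker := by
    rw [← hS]
    exact Subgroup.normalClosure_le_normal fun r hr => hrel r hr
  have feq : ∀ x y, π x = π y → f k x = f k y := fun x y hxy => by
    have : x * y⁻¹ ∈ π.ker := by simp [MonoidHom.mem_ker, hxy]
    have := hker this
    rw [MonoidHom.mem_ker, map_mul, map_inv, mul_inv_eq_one] at this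
    exact this
  have h := feq ((wt ^ (p + 1) * wτ * (wt ^ (p + 1))⁻¹) * ((wt ^ q)⁻¹ * wτ * wt ^ q))
    (((wt ^ q)⁻¹ * wτ * wt ^ q) * (wt ^ (p + 1) * wτ * (wt ^ (p + 1))⁻¹))
    (by simpa [hwt, hwτ] using hcomm)
  simp only [map_mul, map_pow, map_inv, ht, hτ] at h
  rw [hu_conj_pow' q hq] at h
  have e : (HNNExtension.t ^ (p + 1) * hu (N k) t τ * (HNNExtension.t ^ (p + 1))⁻¹ : HN (N k) t)
      = HNNExtension.t * hu (N k) t (t ^ p * τ * (t ^ p)⁻¹) * HNNExtension.t⁻¹ := by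
    rw [← hu_conj_pow p hp, pow_succ']; group
  rw [e] at h
  refine hu_not_commute (hp p le_rfl) (hq q le_rfl) ?_ ?_ h
  · convert hp' using 1
    rw [pow_succ']; group
  · convert hq' using 1
    rw [pow_succ]; group

end Filtration

end AbstractPart

section HoughtonPart

/-- `g` is eventually translation by `m i` on each ray `i`. -/
def Sh {n : ℕ} (g : Fin n × ℕ → Fin n × ℕ) (m : Fin n → ℤ) : Prop :=
  ∀ i : Fin n, ∃ N : ℕ, ∀ x : ℕ, N ≤ x → (g (i, x)).1 = i ∧ ((g (i, x)).2 : ℤ) = (x : ℤ) + m i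

lemma sh_of_evTrans {n : ℕ} {g : Fin n × ℕ → Fin n × ℕ} (h : IsEvTrans g) : ∃ m, Sh g m := by
  choose m N h using h
  exact ⟨m, fun i => ⟨N i, h i⟩⟩

lemma Sh.evTrans {n : ℕ} {g : Fin n × ℕ → Fin n × ℕ} {m : Fin n → ℤ} (h : Sh g m) :
    IsEvTrans g := fun i => ⟨m i, h i⟩

lemma Sh.chiF {n : ℕ} {g : Fin n × ℕ → Fin n × ℕ} {m : Fin n → ℤ} (h : Sh g m) (i : Fin n) :
    chiF n i g = m i := by
  have h' : ∃ m : ℤ, ∃ N : ℕ, ∀ x : ℕ, N ≤ x →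
      (g (i, x)).1 = i ∧ ((g (i, x)).2 : ℤ) = (x : ℤ) + m := ⟨m i, h i⟩
  have e : _root_.chiF n i g = h'.choose := by rw [_root_.chiF, dif_pos h']
  rw [e]
  obtain ⟨N, hN⟩ := h'.choose_spec
  obtain ⟨N', hN'⟩ := h i
  have h1 := (hN (max N N') (le_max_left _ _)).2
  have h2 := (hN' (max N N') (le_max_right _ _)).2
  omega

lemma Sh.eq {n : ℕ} {g : Fin n × ℕ → Fin n × ℕ} {m : Fin n → ℤ} (h : Sh g m) (i : Fin n) :
    ∃ N : ℕ, ∀ x y : ℕ, N ≤ x → (y : ℤ) = x + m i → g (i, x) = (i, y) := by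
  obtain ⟨N, hN⟩ := h i
  refine ⟨N, fun x y hx hy => Prod.ext (hN x hx).1 ?_⟩
  have := (hN x hx).2
  simp only
  omega

lemma Sh.mul {n : ℕ} {g h : Equiv.Perm (Fin n × ℕ)} {m m' : Fin n → ℤ} (hg : Sh g m)
    (hh : Sh h m') : Sh ⇑(g * h) (m + m') := by
  intro i
  obtain ⟨N, hN⟩ := hg i
  obtain ⟨N', hN'⟩ := hh i
  refine ⟨N + N' + (m' i).natAbs, fun x hx => ?_⟩
  obtain ⟨h1, h2⟩ := hN' x (by omega)
  have h3 : h (i, x) = (i, (h (i, x)).2) := Prod.ext h1 rfl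
  obtain ⟨h4, h5⟩ := hN (h (i, x)).2 (by omega)
  rw [Equiv.Perm.mul_apply, h3]
  refine ⟨h4, ?_⟩
  rw [h5, h2, Pi.add_apply]; ring

lemma Sh.inv {n : ℕ} {g : Equiv.Perm (Fin n × ℕ)} {m : Fin n → ℤ} (hg : Sh g m) :
    Sh ⇑g⁻¹ (-m) := by
  intro i
  obtain ⟨N, hN⟩ := hg.eq i
  refine ⟨N + (m i).natAbs, fun x hx => ?_⟩
  have e : g (i, ((x : ℤ) - m i).toNat) = (i, x) := hN _ _ (by omega) (by omega)
  have : g⁻¹ (i, x) = (i, ((x : ℤ) - m i).toNat) := by rw [← e]; simp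
  rw [this]
  refine ⟨rfl, ?_⟩
  simp only [Pi.neg_apply]
  omega

lemma Sh.one {n : ℕ} : Sh ⇑(1 : Equiv.Perm (Fin n × ℕ)) 0 := fun i => ⟨0, fun x _ => by simp⟩

/-- A permutation with finite support has no eventual shift. -/
lemma Sh.of_finite {n : ℕ} {g : Equiv.Perm (Fin n × ℕ)} (h : {x | g x ≠ x}.Finite) : Sh ⇑g 0 := by
  intro i
  obtain ⟨N, hN⟩ := (h.image Prod.snd).bddAbove
  refine ⟨N + 1, fun x hx => ?_⟩
  have : g (i, x) = (i, x) := by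
    by_contra hne
    have := hN ⟨(i, x), hne, rfl⟩
    simp only at this
    omega
  simp [this]

lemma sh_swap {n : ℕ} (a b : Fin n × ℕ) : Sh ⇑(Equiv.swap a b) 0 := by
  classical
  refine Sh.of_finite ((Set.toFinite {a, b}).subset fun x hx => ?_)
  by_contra h
  simp only [Set.mem_insert_iff, Set.mem_singleton_iff, not_or] at h
  exact hx (Equiv.swap_apply_of_ne_of_ne h.1 h.2)

/-- A shift concentrated on one ray cannot be positive. -/
lemma sh_single_le {n : ℕ} {g : Equiv.Perm (Fin n × ℕ)} {m : Fin n → ℤ} (hg : Sh g m) (r : Fin n)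
    (h0 : ∀ i, i ≠ r → m i = 0) : m r ≤ 0 := by
  by_contra! hpos
  choose N hN using hg.eq
  obtain ⟨M, hM⟩ : ∃ M, ∀ i, N i ≤ M := ⟨∑ i, N i, fun i =>
    Finset.single_le_sum (f := N) (fun _ _ => Nat.zero_le _) (Finset.mem_univ i)⟩
  have hmn : ∀ i, 0 ≤ m i := fun i => by
    by_cases h : i = r
    · rw [h]; omega
    · rw [h0 i h]
  let F : Finset (Fin n × ℕ) := Finset.univ ×ˢ Finset.range M
  have hout : ∀ y, y ∉ F → g y = (y.1, y.2 + (m y.1).toNat) := by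
    rintro ⟨i, x⟩ hy
    simp only [F, Finset.mem_product, Finset.mem_univ, Finset.mem_range, true_and, not_lt] at hy
    exact hN i x _ ((hM i).trans hy) (by have := hmn i; push_cast; omega)
  have hsub : insert (r, M) F ⊆ F.map g.toEmbedding := by
    intro y hy
    rw [Finset.mem_map]
    refine ⟨g⁻¹ y, ?_, by simp⟩
    by_contra hc
    have e := hout _ hc
    have e' : y = ((g⁻¹ y).1, (g⁻¹ y).2 + (m (g⁻¹ y).1).toNat) := by
      rw [← e]; simp
    simp only [F, Finset.mem_product, Finset.mem_univ, Finset.mem_range, true_and, not_lt] at hc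
    rcases Finset.mem_insert.1 hy with rfl | hy
    · have e1 := congrArg Prod.fst e'
      have e2 := congrArg Prod.snd e'
      simp only at e1 e2
      rw [← e1] at e2
      omega
    · have e2 := congrArg Prod.snd e'
      simp only [F, Finset.mem_product, Finset.mem_univ, Finset.mem_range, true_and] at hy e2
      omega
  have := Finset.card_le_card hsub
  rw [Finset.card_map, Finset.card_insert_of_notMem (by simp [F])] at this
  omega

lemma sh_single_eq {n : ℕ} {g : Equiv.Perm (Fin n × ℕ)} {m : Fin n → ℤ} (hg : Sh g m) (r : Fin n)
    (h0 : ∀ i, i ≠ r → m i = 0) : m = 0 := by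
  have h1 := sh_single_le hg r h0
  have h2 := sh_single_le hg.inv r (fun i hi => by simp [h0 i hi])
  funext i
  by_cases h : i = r
  · subst h; simp at h2 ⊢; omega
  · exact h0 i h

lemma Sh.finite {n : ℕ} {g : Equiv.Perm (Fin n × ℕ)} (h : Sh ⇑g 0) :
    (MulAction.fixedBy (Fin n × ℕ) g)ᶜ.Finite := by
  choose N hN using h.eq
  refine (Finset.finite_toSet (Finset.univ ×ˢ Finset.range (∑ i, N i))).subset ?_
  rintro ⟨i, x⟩ hx
  simp only [Set.mem_compl_iff, MulAction.mem_fixedBy, Equiv.Perm.smul_def] at hx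
  simp only [Finset.coe_product, Finset.coe_univ, Set.mem_prod, Set.mem_univ, true_and,
    Finset.mem_coe, Finset.mem_range]
  by_contra! hc
  exact hx (hN i x x ((Finset.single_le_sum (f := N) (fun _ _ => Nat.zero_le _)
    (Finset.mem_univ i)).trans hc) (by simp))

/-- A bi-infinite line: up ray `a` in an arithmetic progression, and ray `b` reversed. -/
def ln {n : ℕ} (a b : Fin n) (s p : ℕ) : ℤ → Fin n × ℕ
  | Int.ofNat i => (a, s * i + p)
  | Int.negSucc i => (b, i)

lemma ln_nat {n : ℕ} (a b : Fin n) (s p i : ℕ) : ln a b s p (i : ℤ) = (a, s * i + p) := rfl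

lemma ln_neg {n : ℕ} (a b : Fin n) (s p i : ℕ) : ln a b s p (-(i : ℤ) - 1) = (b, i) := by
  have : -(i : ℤ) - 1 = Int.negSucc i := by omega
  rw [this]; rfl

lemma int_cases (i : ℤ) : (∃ j : ℕ, i = j) ∨ ∃ j : ℕ, i = -(j : ℤ) - 1 := by
  rcases le_or_gt 0 i with h | h
  · exact Or.inl ⟨i.toNat, by omega⟩
  · exact Or.inr ⟨(-i - 1).toNat, by omega⟩

lemma ln_inj {n : ℕ} {a b : Fin n} (hab : a ≠ b) {s : ℕ} (hs : 0 < s) (p : ℕ) :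
    Function.Injective (ln a b s p) := by
  intro i j h
  rcases int_cases i with ⟨i, rfl⟩ | ⟨i, rfl⟩ <;> rcases int_cases j with ⟨j, rfl⟩ | ⟨j, rfl⟩ <;>
    simp only [ln_nat, ln_neg, Prod.mk.injEq, true_and] at h
  · have := Nat.eq_of_mul_eq_mul_left hs (Nat.add_right_cancel h)
    rw [this]
  · exact absurd h.1 hab
  · exact absurd h.1.symm hab
  · rw [h]

/-- Shift along a line. -/
noncomputable def sg {X : Type*} (c : ℤ → X) (hc : Function.Injective c) : Equiv.Perm X :=
  (Equiv.addRight (1 : ℤ)).viaEmbedding ⟨c, hc⟩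

lemma sg_apply {X : Type*} (c : ℤ → X) (hc : Function.Injective c) (i : ℤ) :
    sg c hc (c i) = c (i + 1) :=
  Equiv.Perm.viaEmbedding_apply _ ⟨c, hc⟩ i

lemma sg_apply_not {X : Type*} (c : ℤ → X) (hc : Function.Injective c) (x : X)
    (hx : ∀ i, c i ≠ x) : sg c hc x = x :=
  Equiv.Perm.viaEmbedding_apply_of_notMem _ ⟨c, hc⟩ x (by rintro ⟨i, hi⟩; exact hx i hi)

lemma zpow_line {X : Type*} (u : Equiv.Perm X) (c : ℤ → X) (hc : ∀ i, u (c i) = c (i + 1)) :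
    ∀ (b i : ℤ), (u ^ b) (c i) = c (i + b) := by
  intro b
  induction b with
  | zero => simp
  | succ b ih =>
    intro i; rw [add_comm, zpow_add, Equiv.Perm.mul_apply, ih, zpow_one, hc]; congr 1; ring
  | pred b ih =>
    intro i
    rw [sub_eq_add_neg, add_comm, zpow_add, Equiv.Perm.mul_apply, ih, zpow_neg_one,
      Equiv.Perm.inv_eq_iff_eq, hc]
    congr 1; ring

lemma swap_line_mem {X : Type*} [DecidableEq X] (H : Subgroup (Equiv.Perm X)) (u : Equiv.Perm X)
    (hu : u ∈ H) (c : ℤ → X) (hc : ∀ i, u (c i) = c (i + 1))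
    (h0 : Equiv.swap (c 0) (c 1) ∈ H) (i : ℤ) : Equiv.swap (c 0) (c i) ∈ H := by
  have hz := zpow_line u c hc
  have hadj : ∀ i : ℤ, Equiv.swap (c i) (c (i + 1)) ∈ H := by
    intro i
    have : Equiv.swap (c i) (c (i + 1)) = u ^ i * Equiv.swap (c 0) (c 1) * (u ^ i)⁻¹ := by
      rw [← Equiv.swap_apply_apply, hz, hz]; congr 2 <;> ring
    rw [this]
    exact H.mul_mem (H.mul_mem (H.zpow_mem hu i) h0) (H.inv_mem (H.zpow_mem hu i))
  induction i with
  | zero => rw [Equiv.swap_self]; exact H.one_mem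
  | succ i ih => exact SubmonoidClass.swap_mem_trans H ih (hadj i)
  | pred i ih =>
    refine SubmonoidClass.swap_mem_trans H ih ?_
    have := hadj (-(i : ℤ) - 1)
    rw [sub_add_cancel] at this
    rwa [Equiv.swap_comm]

lemma sh_sg {n : ℕ} {a b : Fin n} (hab : a ≠ b) :
    Sh ⇑(sg (ln a b 1 0) (ln_inj hab one_pos 0)) (Pi.single a 1 - Pi.single b 1) := by
  intro i
  refine ⟨1, fun x hx => ?_⟩
  by_cases hia : i = a
  · subst hia
    have : (i, x) = ln i b 1 0 (x : ℤ) := by simp [ln_nat]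
    rw [this, sg_apply]
    have e := ln_nat i b 1 0 (x + 1)
    push_cast at e
    rw [e]
    simp [hab]
  · by_cases hib : i = b
    · subst hib
      have : (i, x) = ln a i 1 0 (-(x : ℤ) - 1) := by rw [ln_neg]
      rw [this, sg_apply]
      have e2 : (-(x : ℤ) - 1 + 1) = -((x - 1 : ℕ) : ℤ) - 1 := by omega
      rw [e2, ln_neg]
      simp [hia]; omega
    · rw [sg_apply_not _ _ _ (fun j hj => ?_)]
      · simp [hia, hib]
      · rcases int_cases j with ⟨j, rfl⟩ | ⟨j, rfl⟩
        · rw [ln_nat] at hj; exact hia (congrArg Prod.fst hj).symm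
        · rw [ln_neg] at hj; exact hib (congrArg Prod.fst hj).symm

/-- The element `t`: it moves rays `b` and `d` inward and ray `a` outward by two. -/
noncomputable def tt {n : ℕ} {a b d : Fin n} (hab : a ≠ b) (had : a ≠ d) :
    Equiv.Perm (Fin n × ℕ) :=
  sg (ln a b 2 0) (ln_inj hab two_pos 0) * sg (ln a d 2 1) (ln_inj had two_pos 1)

lemma ln_disj {n : ℕ} {a b d : Fin n} (hab : a ≠ b) (had : a ≠ d) (hbd : b ≠ d) (i j : ℤ) :
    ln a b 2 0 i ≠ ln a d 2 1 j := by
  rcases int_cases i with ⟨i, rfl⟩ | ⟨i, rfl⟩ <;> rcases int_cases j with ⟨j, rfl⟩ | ⟨j, rfl⟩ <;>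
    simp only [ln_nat, ln_neg, ne_eq, Prod.mk.injEq, true_and, not_and]
  · omega
  · exact fun h => absurd h had
  · exact fun h => absurd h.symm hab
  · exact fun h => absurd h hbd

lemma tt_c {n : ℕ} {a b d : Fin n} (hab : a ≠ b) (had : a ≠ d) (hbd : b ≠ d) (i : ℤ) :
    tt hab had (ln a b 2 0 i) = ln a b 2 0 (i + 1) := by
  rw [tt, Equiv.Perm.mul_apply, sg_apply_not (ln a d 2 1), sg_apply]
  exact fun j => (ln_disj hab had hbd i j).symm

lemma tt_d {n : ℕ} {a b d : Fin n} (hab : a ≠ b) (had : a ≠ d) (hbd : b ≠ d) (i : ℤ) :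
    tt hab had (ln a d 2 1 i) = ln a d 2 1 (i + 1) := by
  rw [tt, Equiv.Perm.mul_apply, sg_apply, sg_apply_not]
  exact fun j => ln_disj hab had hbd j _

lemma tt_not {n : ℕ} {a b d : Fin n} (hab : a ≠ b) (had : a ≠ d) (i : Fin n) (x : ℕ)
    (ha : i ≠ a) (hb : i ≠ b) (hd : i ≠ d) :
    tt hab had (i, x) = (i, x) := by
  rw [tt, Equiv.Perm.mul_apply, sg_apply_not (ln a d 2 1), sg_apply_not (ln a b 2 0)]
  all_goals
    intro j hj
    rcases int_cases j with ⟨j, rfl⟩ | ⟨j, rfl⟩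
    · rw [ln_nat] at hj; exact ha (congrArg Prod.fst hj).symm
    · rw [ln_neg] at hj
      have := (congrArg Prod.fst hj).symm
      simp only at this
      contradiction

lemma sh_tt {n : ℕ} {a b d : Fin n} (hab : a ≠ b) (had : a ≠ d) (hbd : b ≠ d) :
    Sh ⇑(tt hab had) (Pi.single a 2 - Pi.single b 1 - Pi.single d 1) := by
  intro i
  refine ⟨1, fun x hx => ?_⟩
  by_cases hia : i = a
  · subst hia
    rcases Nat.even_or_odd' x with ⟨y, rfl | rfl⟩
    · have : (i, 2 * y) = ln i b 2 0 (y : ℤ) := by simp [ln_nat]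
      rw [this, tt_c hab had hbd]
      have e := ln_nat i b 2 0 (y + 1)
      push_cast at e
      rw [e]
      simp [hab, had]; ring
    · have : (i, 2 * y + 1) = ln i d 2 1 (y : ℤ) := by simp [ln_nat]
      rw [this, tt_d hab had hbd]
      have e := ln_nat i d 2 1 (y + 1)
      push_cast at e
      rw [e]
      simp [hab, had]; ring
  · by_cases hib : i = b
    · subst hib
      have : (i, x) = ln a i 2 0 (-(x : ℤ) - 1) := by rw [ln_neg]
      rw [this, tt_c hab had hbd]
      have e2 : (-(x : ℤ) - 1 + 1) = -((x - 1 : ℕ) : ℤ) - 1 := by omega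
      rw [e2, ln_neg]
      simp [hia, hbd]; omega
    · by_cases hid : i = d
      · subst hid
        have : (i, x) = ln a i 2 1 (-(x : ℤ) - 1) := by rw [ln_neg]
        rw [this, tt_d hab had hbd]
        have e2 : (-(x : ℤ) - 1 + 1) = -((x - 1 : ℕ) : ℤ) - 1 := by omega
        rw [e2, ln_neg]
        simp [hia, hib]; omega
      · rw [tt_not hab had i x hia hib hid]
        simp [hia, hib, hid]

lemma mem_of_sh_zero {n : ℕ} (H : Subgroup (Equiv.Perm (Fin n × ℕ))) (o : Fin n × ℕ)
    (ho : ∀ x, Equiv.swap o x ∈ H) {g : Equiv.Perm (Fin n × ℕ)} (hg : Sh ⇑g 0) : g ∈ H := by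
  have h := mem_closure_isSwap'.2 hg.finite
  refine (Subgroup.closure_le H).2 ?_ h
  rintro _ ⟨x, y, -, rfl⟩
  refine SubmonoidClass.swap_mem_trans H ?_ (ho y)
  rw [Equiv.swap_comm]; exact ho x

/-- The shift vectors realised by a subgroup. -/
def shiftVecs {n : ℕ} (H : Subgroup (Equiv.Perm (Fin n × ℕ))) : AddSubgroup (Fin n → ℤ) where
  carrier := {m | ∃ h ∈ H, Sh ⇑h m}
  zero_mem' := ⟨1, H.one_mem, Sh.one⟩
  add_mem' := by
    rintro a b ⟨g, hg, hg'⟩ ⟨h, hh, hh'⟩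
    exact ⟨g * h, H.mul_mem hg hh, hg'.mul hh'⟩
  neg_mem' := by
    rintro a ⟨g, hg, hg'⟩
    exact ⟨g⁻¹, H.inv_mem hg, hg'.inv⟩

section Main

/-- A finite generating set for the kernel. -/
noncomputable def gens {n : ℕ} {a b d : Fin n} (hab : a ≠ b) (had : a ≠ d) :
    Set (Equiv.Perm (Fin n × ℕ)) :=
  {tt hab had, Equiv.swap (ln a b 2 0 0) (ln a b 2 0 1),
    Equiv.swap (ln a d 2 1 0) (ln a d 2 1 1), Equiv.swap (ln a b 2 0 0) (ln a d 2 1 0)} ∪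
  ((Set.range fun j : {j : Fin n // d ≠ j ∧ a ≠ j ∧ b ≠ j} =>
      sg (ln d j.1 1 0) (ln_inj j.2.1 one_pos 0)) ∪
   (Set.range fun j : {j : Fin n // d ≠ j ∧ a ≠ j ∧ b ≠ j} =>
      Equiv.swap (ln d j.1 1 0 0) (ln d j.1 1 0 1)))

lemma gens_finite {n : ℕ} {a b d : Fin n} (hab : a ≠ b) (had : a ≠ d) :
    (gens hab had).Finite := by
  refine Set.Finite.union (Set.toFinite _) (Set.Finite.union ?_ ?_) <;> exact Set.finite_range _

lemma gens_swap {n : ℕ} {a b d : Fin n} (hab : a ≠ b) (had : a ≠ d) (hbd : b ≠ d)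
    (x : Fin n × ℕ) :
    Equiv.swap (ln a b 2 0 0) x ∈ Subgroup.closure (gens hab had) := by
  set H := Subgroup.closure (gens hab had) with hH
  have ht : tt hab had ∈ H := Subgroup.subset_closure (by simp [gens])
  have hc := swap_line_mem H _ ht _ (tt_c hab had hbd)
    (Subgroup.subset_closure (by simp [gens]))
  have hd0 := swap_line_mem H _ ht _ (tt_d hab had hbd)
    (Subgroup.subset_closure (by simp [gens]))
  have hcd : Equiv.swap (ln a b 2 0 0) (ln a d 2 1 0) ∈ H :=
    Subgroup.subset_closure (by simp [gens])
  have hd := fun i => SubmonoidClass.swap_mem_trans H hcd (hd0 i)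
  obtain ⟨i, x⟩ := x
  by_cases hia : i = a
  · subst hia
    rcases Nat.even_or_odd' x with ⟨y, rfl | rfl⟩
    · exact hc (y : ℤ)
    · exact hd (y : ℤ)
  · by_cases hib : i = b
    · subst hib
      have := hc (-(x : ℤ) - 1)
      rwa [ln_neg] at this
    · by_cases hid : i = d
      · subst hid
        have := hd (-(x : ℤ) - 1)
        rwa [ln_neg] at this
      · have hj : d ≠ i ∧ a ≠ i ∧ b ≠ i := ⟨Ne.symm hid, Ne.symm hia, Ne.symm hib⟩
        have h1 : sg (ln d i 1 0) (ln_inj hj.1 one_pos 0) ∈ H :=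
          Subgroup.subset_closure (Or.inr (Or.inl ⟨⟨i, hj⟩, rfl⟩))
        have h2 : Equiv.swap (ln d i 1 0 0) (ln d i 1 0 1) ∈ H :=
          Subgroup.subset_closure (Or.inr (Or.inr ⟨⟨i, hj⟩, rfl⟩))
        have h3 := swap_line_mem H _ h1 _ (sg_apply _ _) h2 (-(x : ℤ) - 1)
        have h4 := hd (-((0 : ℕ) : ℤ) - 1)
        rw [ln_neg] at h3 h4
        exact SubmonoidClass.swap_mem_trans H h4 h3

lemma mem_closure_gens {n : ℕ} {a b d : Fin n} (hab : a ≠ b) (had : a ≠ d) (hbd : b ≠ d)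
    {g : Equiv.Perm (Fin n × ℕ)} {m : Fin n → ℤ} (hg : Sh ⇑g m)
    (hm : m a + 2 * m b = 0) : g ∈ Subgroup.closure (gens hab had) := by
  set H := Subgroup.closure (gens hab had) with hH
  have hv0 : (Pi.single a 2 - Pi.single b 1 - Pi.single d 1 : Fin n → ℤ) ∈ shiftVecs H :=
    ⟨_, Subgroup.subset_closure (by simp [gens]), sh_tt hab had hbd⟩
  have hv : ∀ j : {j : Fin n // d ≠ j ∧ a ≠ j ∧ b ≠ j},
      (Pi.single d 1 - Pi.single j.1 1 : Fin n → ℤ) ∈ shiftVecs H := fun j =>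
    ⟨_, Subgroup.subset_closure (Or.inr (Or.inl ⟨j, rfl⟩)), sh_sg j.2.1⟩
  have hsum := (shiftVecs H).add_mem ((shiftVecs H).zsmul_mem hv0 (-m b))
    ((shiftVecs H).sum_mem (t := Finset.univ)
      (fun j _ => (shiftVecs H).zsmul_mem (hv j) (-m j.1)))
  obtain ⟨h, hh, hs⟩ := hsum
  have hq := hs.inv.mul hg
  have hz := sh_single_eq hq d (fun i hi => by
    simp only [Pi.add_apply, Pi.neg_apply, Pi.smul_apply, Pi.sub_apply, Finset.sum_apply,
      smul_eq_mul, Pi.single_apply, hi, if_false]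
    by_cases hia : i = a
    · subst hia
      rw [Finset.sum_eq_zero (fun j _ => by simp [j.2.2.1])]
      simp [hab]; omega
    · by_cases hib : i = b
      · subst hib
        rw [Finset.sum_eq_zero (fun j _ => by simp [j.2.2.2])]
        simp [hia]
      · rw [Finset.sum_eq_single ⟨i, Ne.symm hi, Ne.symm hia, Ne.symm hib⟩]
        · simp [hia, hib]
        · intro j _ hj
          have : i ≠ j.1 := fun h => hj (Subtype.ext h.symm)
          simp [this]
        · simp)
  rw [hz] at hq
  have h1 : h⁻¹ * g ∈ H := mem_of_sh_zero H _ (gens_swap hab had hbd) hq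
  have := H.mul_mem hh h1
  rwa [mul_inv_cancel_left] at this

lemma gens_sh {n : ℕ} {a b d : Fin n} (hab : a ≠ b) (had : a ≠ d) (hbd : b ≠ d)
    {g : Equiv.Perm (Fin n × ℕ)} (hg : g ∈ gens hab had) :
    ∃ m, Sh ⇑g m ∧ m a + 2 * m b = 0 := by
  rcases hg with hg | ⟨⟨j, hj⟩, rfl⟩ | ⟨j, rfl⟩
  · rcases hg with rfl | rfl | rfl | rfl
    · exact ⟨_, sh_tt hab had hbd, by simp [hab, had, hab.symm, hbd]⟩
    all_goals exact ⟨0, sh_swap _ _, by simp⟩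
  · exact ⟨_, sh_sg hj.1, by simp [hj.2.1, hj.2.2, had, hbd]⟩
  · exact ⟨0, sh_swap _ _, by simp⟩

/-- The filtration: elements fixing the line outside of `[-k, k)`. -/
def filt {n : ℕ} (K : Subgroup (Equiv.Perm (Fin n × ℕ))) (c : ℤ → Fin n × ℕ) (k : ℕ) : Subgroup K where
  carrier := {g | ∀ i : ℤ, i < -k ∨ k ≤ i → g.1 (c i) = c i}
  one_mem' := fun i _ => by simp
  mul_mem' := fun {g h} hg hh i hi => by
    have h1 := hg i hi
    have h2 := hh i hi
    simp [h1, h2]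
  inv_mem' := fun {g} hg i hi => by
    have h1 := hg i hi
    change (g.1)⁻¹ (c i) = c i
    rw [Equiv.Perm.inv_eq_iff_eq, h1]

lemma mem_filt {n : ℕ} {K : Subgroup (Equiv.Perm (Fin n × ℕ))} {c : ℤ → Fin n × ℕ} {k : ℕ} {g : K} :
    g ∈ filt K c k ↔ ∀ i : ℤ, i < -k ∨ k ≤ i → g.1 (c i) = c i := Iff.rfl

lemma swap_mem_filt {n : ℕ} {K : Subgroup (Equiv.Perm (Fin n × ℕ))} {c : ℤ → Fin n × ℕ}
    (hc : Function.Injective c) {k : ℕ} {g : K} {i : ℤ}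
    (hg : g.1 = Equiv.swap (c i) (c (i + 1))) :
    g ∈ filt K c k ↔ -k ≤ i ∧ i + 1 < k := by
  rw [mem_filt, hg]
  constructor
  · intro h
    by_contra hcon
    rcases lt_or_ge i (-k) with h1 | h1
    · have := h i (Or.inl h1)
      rw [Equiv.swap_apply_left] at this
      have := hc this
      omega
    · have := h (i + 1) (Or.inr (by omega))
      rw [Equiv.swap_apply_right] at this
      have := hc this
      omega
  · intro h j hj
    exact Equiv.swap_apply_of_ne_of_ne (fun e => by have := hc e; omega)
      (fun e => by have := hc e; omega)

lemma not_fp_aux {n : ℕ} {a b d : Fin n} (hab : a ≠ b) (had : a ≠ d) (hbd : b ≠ d)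
    (K : Subgroup (Equiv.Perm (Fin n × ℕ)))
    (hK : ∀ η : Equiv.Perm (Fin n × ℕ), η ∈ K ↔ ∃ m, Sh ⇑η m ∧ m a + 2 * m b = 0) :
    ¬ GroupFP K := by
  rintro ⟨l, π, hπ, S, hS⟩
  have hcinj := ln_inj hab two_pos 0
  have htc := tt_c hab had hbd
  set c := ln a b 2 0 with hc
  have htK : tt hab had ∈ K := (hK _).2 (gens_sh hab had hbd (by simp [gens]))
  have hτK : Equiv.swap (c 0) (c 1) ∈ K := (hK _).2 ⟨0, sh_swap _ _, by simp⟩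
  have hz := zpow_line _ c htc
  have hconj : ∀ i : ℤ, (tt hab had) ^ i * Equiv.swap (c 0) (c 1) * ((tt hab had) ^ i)⁻¹ =
      Equiv.swap (c i) (c (i + 1)) := fun i => by
    rw [← Equiv.swap_apply_apply, hz, hz]; congr 2 <;> ring
  have hconj1 : ∀ i : ℕ, (tt hab had) ^ i * Equiv.swap (c 0) (c 1) * ((tt hab had) ^ i)⁻¹ =
      Equiv.swap (c i) (c (i + 1)) := fun i => by
    have := hconj i
    rwa [zpow_natCast] at this
  have hconj2 : ∀ i : ℕ, ((tt hab had) ^ i)⁻¹ * Equiv.swap (c 0) (c 1) * (tt hab had) ^ i =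
      Equiv.swap (c (-i)) (c (-i + 1)) := fun i => by
    have := hconj (-i)
    rwa [zpow_neg, zpow_natCast, inv_inv] at this
  refine not_fp_of_filtration (filt K c) ⟨tt hab had, htK⟩ ?_ ?_ ?_ ?_ ?_
    ⟨Equiv.swap (c 0) (c 1), hτK⟩ ?_ π hπ S hS
  · intro k k' hkk g hg
    rw [mem_filt] at hg ⊢
    exact fun i hi => hg i (by omega)
  · rintro ⟨g, hg⟩
    obtain ⟨m, hm, hm0⟩ := (hK g).1 hg
    obtain ⟨N, hN⟩ := hm.eq a
    obtain ⟨N', hN'⟩ := hm.eq b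
    refine ⟨-m b, N + N' + (m b).natAbs + 1, ?_⟩
    rw [mem_filt]
    intro i hi
    have e : ((⟨g, hg⟩ * ((⟨tt hab had, htK⟩ : K) ^ (-m b))⁻¹ : K) : Equiv.Perm (Fin n × ℕ)) =
        g * (tt hab had) ^ (m b) := by simp
    rw [e, Equiv.Perm.mul_apply, hz]
    rcases hi with hi | hi
    · obtain ⟨x, hx⟩ : ∃ x : ℕ, i + m b = -(x : ℤ) - 1 := ⟨(-(i + m b) - 1).toNat, by omega⟩
      obtain ⟨y, hy⟩ : ∃ y : ℕ, i = -(y : ℤ) - 1 := ⟨(-i - 1).toNat, by omega⟩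
      rw [hx, hy, hc, ln_neg, ln_neg]
      exact hN' _ _ (by omega) (by omega)
    · obtain ⟨x, hx⟩ : ∃ x : ℕ, i + m b = x := ⟨(i + m b).toNat, by omega⟩
      obtain ⟨y, hy⟩ : ∃ y : ℕ, i = y := ⟨i.toNat, by omega⟩
      rw [hx, hy, hc, ln_nat, ln_nat]
      exact hN _ _ (by omega) (by push_cast; omega)
  · intro j k h
    have := mem_filt.1 h k (Or.inr le_rfl)
    simp only [Subgroup.coe_zpow] at this
    rw [hz] at this
    have := hcinj this
    omega
  · intro g k h
    rw [mem_filt] at h ⊢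
    intro i hi
    push_cast at hi
    have h1 := h (i - 1) (by omega)
    have h2 : (tt hab had)⁻¹ (c i) = c (i - 1) := by
      rw [Equiv.Perm.inv_eq_iff_eq, htc, sub_add_cancel]
    simp only [Subgroup.coe_mul, Subgroup.coe_inv, Equiv.Perm.mul_apply]
    rw [h2, h1, htc, sub_add_cancel]
  · intro g k h
    rw [mem_filt] at h ⊢
    intro i hi
    push_cast at hi
    have h1 := h (i + 1) (by omega)
    simp only [Subgroup.coe_mul, Subgroup.coe_inv, Equiv.Perm.mul_apply]
    rw [htc, h1, Equiv.Perm.inv_eq_iff_eq, htc]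
  · filter_upwards [Filter.eventually_ge_atTop 2] with k hk
    refine ⟨k - 2, k, ?_, ?_, ?_, ?_, ?_⟩
    · intro i hi
      rw [swap_mem_filt hcinj (hconj1 i)]; omega
    · intro i hi
      rw [swap_mem_filt hcinj (hconj2 i)]; omega
    · rw [swap_mem_filt hcinj (hconj1 (k - 2 + 1))]; omega
    · rw [swap_mem_filt hcinj (hconj2 (k + 1))]; omega
    · apply Subtype.ext
      have e1 := hconj1 (k - 2 + 1)
      have e2 := hconj2 k
      simp only [Subgroup.coe_mul, Subgroup.coe_inv, Subgroup.coe_pow]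
      rw [e1, e2, Equiv.mul_swap_eq_swap_mul, Equiv.swap_apply_of_ne_of_ne,
        Equiv.swap_apply_of_ne_of_ne]
      all_goals
        intro e
        have := hcinj e
        omega

end Main

end HoughtonPart

/-- For every `n ≥ 3`, the kernel of `χ_1 + 2·χ_2 : H_n → ℤ` is finitely generated but
not finitely presented. -/
theorem ker_chi1_add_two_chi2_fg_not_fp (n : ℕ) (hn : 3 ≤ n)
    (K : Subgroup (Equiv.Perm (Fin n × ℕ)))
    (hK : ∀ η : Equiv.Perm (Fin n × ℕ),
      η ∈ K ↔ η ∈ Houghton n ∧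
        chiF n ⟨0, by omega⟩ ⇑η + 2 * chiF n ⟨1, by omega⟩ ⇑η = 0) :
    Group.FG ↥K ∧ ¬ GroupFP ↥K := by
  have hab : (⟨0, by omega⟩ : Fin n) ≠ ⟨1, by omega⟩ := by simp
  have had : (⟨0, by omega⟩ : Fin n) ≠ ⟨2, by omega⟩ := by simp
  have hbd : (⟨1, by omega⟩ : Fin n) ≠ ⟨2, by omega⟩ := by simp
  have hK' : ∀ η : Equiv.Perm (Fin n × ℕ), η ∈ K ↔
      ∃ m : Fin n → ℤ, Sh ⇑η m ∧ m ⟨0, by omega⟩ + 2 * m ⟨1, by omega⟩ = 0 := by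
    intro η
    rw [hK]
    constructor
    · rintro ⟨h1, h2⟩
      obtain ⟨m, hm⟩ := sh_of_evTrans h1
      rw [hm.chiF, hm.chiF] at h2
      exact ⟨m, hm, h2⟩
    · rintro ⟨m, hm, h2⟩
      refine ⟨hm.evTrans, ?_⟩
      rw [hm.chiF, hm.chiF, h2]
  refine ⟨?_, not_fp_aux hab had hbd K hK'⟩
  rw [Group.fg_iff_subgroup_fg, Subgroup.fg_iff]
  refine ⟨gens hab had, le_antisymm ?_ ?_, gens_finite hab had⟩
  · rw [Subgroup.closure_le]
    exact fun g hg => (hK' g).2 (gens_sh hab had hbd hg)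
  · intro g hg
    obtain ⟨m, hm, hm0⟩ := (hK' g).1 hg
    exact mem_closure_gens hab had hbd hm hm0
end

section
/- A nontrivial normal subgroup of the Houghton group H_2 is finitely generated if and only if it has finite index in H_2. -/
namespace HoughtonTwo

open Equiv

/-- Identification of the integers with the two rays. -/
def e : ℤ ≃ Fin 2 × ℕ where
  toFun j := if 0 ≤ j then (0, j.toNat) else (1, (-j - 1).toNat)
  invFun p := if p.1 = 0 then (p.2 : ℤ) else -(p.2 : ℤ) - 1
  left_inv j := by
    by_cases h : 0 ≤ j
    · simp [h]
    · simp only [h, if_false]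
      simp
      omega
  right_inv p := by
    obtain ⟨i, x⟩ := p
    fin_cases i
    · simp
    · have : ¬ (0 : ℤ) ≤ -(x : ℤ) - 1 := by omega
      simp only [Fin.mk_one, Fin.isValue, one_ne_zero, if_false, this]
      simp

lemma e_nat (x : ℕ) : e (x : ℤ) = (0, x) := by simp [e]

lemma e_neg (x : ℕ) : e (-(x : ℤ) - 1) = (1, x) := by
  have : ¬ (0 : ℤ) ≤ -(x : ℤ) - 1 := by omega
  simp only [e, Equiv.coe_fn_mk, this, if_false]
  simp

/-- The shift. -/
def t : Perm (Fin 2 × ℕ) := (e.symm.trans (Equiv.addRight (1 : ℤ))).trans e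

lemma t_e (j : ℤ) : t (e j) = e (j + 1) := by simp [t]

lemma tinv_e (j : ℤ) : t⁻¹ (e j) = e (j - 1) := by
  rw [Perm.inv_eq_iff_eq, t_e]; simp

lemma tpow_e (k : ℤ) : ∀ j : ℤ, (t ^ k) (e j) = e (j + k) := by
  induction k using Int.induction_on with
  | zero => simp
  | succ n ih =>
    intro j
    rw [zpow_add_one, Perm.mul_apply, t_e, ih]; congr 1; ring
  | pred n ih =>
    intro j
    rw [zpow_sub_one, Perm.mul_apply, tinv_e, ih]; congr 1; ring

/-- Finitary permutations. -/
def Finitary (f : Perm (Fin 2 × ℕ)) : Prop := {x | f x ≠ x}.Finite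

lemma Finitary.mem {f : Perm (Fin 2 × ℕ)} (hf : Finitary f) : f ∈ Houghton 2 := by
  intro i
  have h2 : ({x | f x ≠ x}.image Prod.snd).Finite := hf.image _
  obtain ⟨B, hB⟩ := h2.bddAbove
  refine ⟨0, B + 1, fun x hx => ?_⟩
  have : f (i, x) = (i, x) := by
    by_contra hne
    have := hB ⟨(i, x), hne, rfl⟩
    simp at this
    omega
  simp [this]

lemma fin_swap (a b : Fin 2 × ℕ) : Finitary (swap a b) := by
  refine (Set.toFinite {a, b}).subset fun x hx => ?_
  by_contra h
  simp at h
  exact hx (swap_apply_of_ne_of_ne h.1 h.2)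

lemma t_mem : t ∈ Houghton 2 := by
  intro i
  fin_cases i
  · refine ⟨1, 0, fun x _ => ?_⟩
    have h : t (0, x) = (0, x + 1) := by
      rw [← e_nat, t_e, ← e_nat]; push_cast; rfl
    simp [h]
  · refine ⟨-1, 1, fun x hx => ?_⟩
    obtain ⟨y, rfl⟩ : ∃ y, x = y + 1 := ⟨x - 1, by omega⟩
    have h : t (1, y + 1) = (1, y) := by
      rw [← e_neg, t_e, ← e_neg]; congr 1; push_cast; ring
    simp [h]

/-- Counting: no net flow. -/
lemma no_flow (σ : Perm ℤ) (M c : ℤ) (hM : 1 ≤ M) (h1 : ∀ x, M ≤ x → σ x = x)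
    (h2 : ∀ x, x < -M → σ x = x + c) : c = 0 := by
  have himg : (Finset.Ico (-M) M).map σ.toEmbedding = Finset.Ico (-M + c) M := by
    ext y
    simp only [Finset.mem_map, Finset.mem_Ico, Equiv.coe_toEmbedding]
    constructor
    · rintro ⟨x, hx, rfl⟩
      constructor
      · by_contra hlt
        have h3 := h2 (σ x - c) (by omega)
        have h4 : σ (σ x - c) = σ x := by rw [h3]; ring
        have := σ.injective h4
        omega
      · by_contra hge
        have := σ.injective (h1 (σ x) (by omega))
        omega
    · rintro ⟨hy1, hy2⟩
      refine ⟨σ.symm y, ?_, by simp⟩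
      have hs : σ (σ.symm y) = y := by simp
      constructor
      · by_contra hlt
        have := h2 (σ.symm y) (by omega)
        omega
      · by_contra hge
        have := h1 (σ.symm y) (by omega)
        omega
  have hc := congrArg Finset.card himg
  rw [Finset.card_map, Int.card_Ico, Int.card_Ico] at hc
  omega

lemma exists_shift {h : Perm (Fin 2 × ℕ)} (hh : h ∈ Houghton 2) :
    ∃ k : ℤ, Finitary (t ^ k * h) := by
  obtain ⟨a, A, hA⟩ := hh 0
  obtain ⟨b, B, hB⟩ := hh 1
  -- in integer coordinates
  have hAz : ∀ x : ℤ, (A : ℤ) ≤ x → h (e x) = e (x + a) := by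
    intro x hx
    obtain ⟨n, rfl⟩ := Int.eq_ofNat_of_zero_le (by omega : 0 ≤ x)
    obtain ⟨p, q⟩ := hA n (by omega)
    rw [e_nat]
    have : (n : ℤ) + a = ((h (0, n)).2 : ℤ) := q.symm
    rw [this, e_nat]
    exact Prod.ext p rfl
  have hBz : ∀ x : ℤ, x < -(B : ℤ) → h (e x) = e (x - b) := by
    intro x hx
    obtain ⟨n, hn⟩ := Int.eq_ofNat_of_zero_le (by omega : 0 ≤ -x - 1)
    obtain rfl : x = -(n : ℤ) - 1 := by omega
    obtain ⟨p, q⟩ := hB n (by omega)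
    rw [e_neg]
    have : -(n : ℤ) - 1 - b = -((h (1, n)).2 : ℤ) - 1 := by rw [q]; ring
    rw [this, e_neg]
    exact Prod.ext p rfl
  set σ : Perm ℤ := (e.trans (t ^ (-a) * h)).trans e.symm with hσ
  have hflow := no_flow σ (A + B + 1) (-b - a) (by omega)
    (fun x hx => by
      simp only [hσ, Equiv.trans_apply, Perm.mul_apply]
      rw [hAz x (by omega), tpow_e]; simp)
    (fun x hx => by
      simp only [hσ, Equiv.trans_apply, Perm.mul_apply]
      rw [hBz x (by omega), tpow_e]; simp; ring)
  refine ⟨-a, ((Set.finite_Ico (-(B : ℤ)) A).image e).subset fun p hp => ?_⟩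
  obtain ⟨x, rfl⟩ := e.surjective p
  refine ⟨x, ?_, rfl⟩
  by_contra hx
  apply hp
  rw [Set.mem_Ico, not_and_or] at hx
  rw [Perm.mul_apply]
  rcases hx with hx | hx
  · rw [hBz x (by omega), tpow_e]; congr 1; omega
  · rw [hAz x (by omega), tpow_e]; congr 1; omega

/-- The basic transposition. -/
def s : Perm (Fin 2 × ℕ) := swap (e 0) (e 1)

lemma conj_s (k : ℤ) : t ^ k * s * (t ^ k)⁻¹ = swap (e k) (e (k + 1)) := by
  rw [s, ← Equiv.swap_apply_apply, tpow_e, tpow_e, zero_add, add_comm]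

lemma swap_mem_of {K : Subgroup (Perm (Fin 2 × ℕ))} (hs : s ∈ K) (ht : t ∈ K)
    (x y : Fin 2 × ℕ) : swap x y ∈ K := by
  have hadj : ∀ k : ℤ, swap (e k) (e (k + 1)) ∈ K := fun k => by
    rw [← conj_s]
    exact K.mul_mem (K.mul_mem (K.zpow_mem ht k) hs) (K.inv_mem (K.zpow_mem ht k))
  have h0 : ∀ k : ℤ, swap (e 0) (e k) ∈ K := by
    intro k
    induction k using Int.induction_on with
    | zero => rw [swap_self]; exact K.one_mem
    | succ n ih => exact SubmonoidClass.swap_mem_trans K ih (hadj n)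
    | pred n ih =>
      refine SubmonoidClass.swap_mem_trans K ih ?_
      have := hadj (-(n : ℤ) - 1)
      rw [swap_comm]
      simpa using this
  obtain ⟨i, rfl⟩ := e.surjective x
  obtain ⟨j, rfl⟩ := e.surjective y
  refine SubmonoidClass.swap_mem_trans K ?_ (h0 j)
  rw [swap_comm]; exact h0 i

lemma fin_mem_closure {f : Perm (Fin 2 × ℕ)} (hf : Finitary f) :
    f ∈ Subgroup.closure {σ : Perm (Fin 2 × ℕ) | σ.IsSwap} :=
  mem_closure_isSwap'.2 hf

lemma le_of_gens {K : Subgroup (Perm (Fin 2 × ℕ))} (hs : s ∈ K) (ht : t ∈ K) :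
    Houghton 2 ≤ K := by
  intro h hh
  obtain ⟨k, hk⟩ := exists_shift hh
  have h1 : t ^ k * h ∈ K := by
    refine (Subgroup.closure_le K).2 ?_ (fin_mem_closure hk)
    rintro _ ⟨x, y, -, rfl⟩
    exact swap_mem_of hs ht x y
  exact (K.mul_mem_cancel_left (K.zpow_mem ht k)).1 h1

def S : Houghton 2 := ⟨s, (fin_swap _ _).mem⟩
def T : Houghton 2 := ⟨t, t_mem⟩

lemma gen_top {K : Subgroup (Houghton 2)} (hS : S ∈ K) (hT : T ∈ K) (x : Houghton 2) :
    x ∈ K := by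
  have := le_of_gens (K := K.map (Houghton 2).subtype) ⟨S, hS, rfl⟩ ⟨T, hT, rfl⟩ x.2
  obtain ⟨y, hy, hxy⟩ := this
  rwa [← Subtype.ext (show (y : Perm (Fin 2 × ℕ)) = x from hxy)]

instance fg : Group.FG (Houghton 2) := by
  refine Group.fg_iff.2 ⟨{S, T}, ?_, Set.toFinite _⟩
  rw [eq_top_iff]
  intro x _
  exact gen_top (Subgroup.subset_closure (by simp)) (Subgroup.subset_closure (by simp)) x

/-- A finitary permutation moving a triple of distinct points to another one. -/
lemma exists_triple {α : Type*} [DecidableEq α] {K : Subgroup (Perm α)}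
    (hK : ∀ x y, swap x y ∈ K)
    {a b c p q r : α} (hab : a ≠ b) (hac : a ≠ c) (hbc : b ≠ c)
    (hpq : p ≠ q) (hpr : p ≠ r) (hqr : q ≠ r) :
    ∃ h ∈ K, h a = p ∧ h b = q ∧ h c = r := by
  obtain ⟨h1, hm1, e1⟩ : ∃ h ∈ K, h a = p := ⟨swap a p, hK _ _, by simp⟩
  obtain ⟨h2, hm2, e2, e4⟩ : ∃ h ∈ K, h a = p ∧ h b = q := by
    refine ⟨swap (h1 b) q * h1, K.mul_mem (hK _ _) hm1, ?_, by simp⟩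
    rw [Perm.mul_apply, e1]
    exact swap_apply_of_ne_of_ne (fun h => hab (h1.injective (e1.trans h))) hpq
  refine ⟨swap (h2 c) r * h2, K.mul_mem (hK _ _) hm2, ?_, ?_, by simp⟩
  · rw [Perm.mul_apply, e2]
    exact swap_apply_of_ne_of_ne (fun h => hac (h2.injective (e2.trans h))) hpr
  · rw [Perm.mul_apply, e4]
    exact swap_apply_of_ne_of_ne (fun h => hbc (h2.injective (e4.trans h))) hqr

lemma exists_not_fin (N : Subgroup (Houghton 2)) (hN : N.Normal) (hnt : N ≠ ⊥)
    (hfg : Group.FG N) : ∃ g ∈ N, ¬ Finitary (g : Perm (Fin 2 × ℕ)) := by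
  by_contra hall
  push Not at hall
  obtain ⟨A, hA⟩ := (Group.fg_iff_subgroup_fg N).1 hfg
  have hAN : ∀ g ∈ A, g ∈ N := fun g hg => hA ▸ Subgroup.subset_closure hg
  set U : Set (Fin 2 × ℕ) := ⋃ g ∈ A, {x | (g : Perm (Fin 2 × ℕ)) x ≠ x} with hU
  have hUfin : U.Finite := A.finite_toSet.biUnion fun g hg => hall g (hAN g hg)
  have hfix : ∀ g ∈ N, ∀ x ∉ U, (g : Perm (Fin 2 × ℕ)) x = x := by
    intro g hg x hx
    rw [← hA] at hg
    induction hg using Subgroup.closure_induction with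
    | mem g hg =>
      by_contra hne
      exact hx (Set.mem_biUnion hg hne)
    | one => rfl
    | mul g h _ _ hg hh => simp [hh, hg]
    | inv g _ hg => exact Perm.inv_eq_iff_eq.2 hg.symm
  obtain ⟨⟨g, hg⟩, hg0⟩ := Subgroup.ne_bot_iff_exists_ne_one.1 hnt
  have hg1 : g ≠ 1 := fun h => hg0 (Subtype.ext h)
  obtain ⟨x, hx⟩ : ∃ x, (g : Perm (Fin 2 × ℕ)) x ≠ x := by
    by_contra hno
    push Not at hno
    exact hg1 (Subtype.ext (Equiv.ext hno))
  obtain ⟨j, rfl⟩ := e.surjective x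
  have hinf : (Set.range fun k : ℤ => e (j + k)).Infinite :=
    Set.infinite_range_of_injective (fun a b hab => by simpa using hab)
  refine hinf (hUfin.subset ?_)
  rintro _ ⟨k, rfl⟩
  by_contra hk
  have h1 := hfix _ (hN.conj_mem g hg (T ^ k)) _ hk
  have h2 : (t ^ k * (g : Perm (Fin 2 × ℕ)) * (t ^ k)⁻¹) (e (j + k)) = e (j + k) := h1
  rw [← tpow_e, Perm.mul_apply, Perm.mul_apply,
    Perm.inv_eq_iff_eq.2 (rfl : (t ^ k) (e j) = (t ^ k) (e j))] at h2
  exact hx ((t ^ k).injective h2)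

lemma finite_index (N : Subgroup (Houghton 2)) (hN : N.Normal) (g : Houghton 2) (hg : g ∈ N)
    (hgf : ¬ Finitary (g : Perm (Fin 2 × ℕ))) : N.FiniteIndex := by
  obtain ⟨k, hk⟩ := exists_shift g.2
  have hk0 : k ≠ 0 := by
    rintro rfl
    exact hgf (by simpa using hk)
  -- a point where g acts as a translation twice
  have hga : ∃ j : ℤ, (g : Perm (Fin 2 × ℕ)) (e j) = e (j - k) ∧
      (g : Perm (Fin 2 × ℕ)) (e (j - k)) = e (j - k - k) := by
    have hfin : (((fun j : ℤ => e j) ⁻¹' {x | (t ^ k * (g : Perm (Fin 2 × ℕ))) x ≠ x}) ∪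
        ((fun j : ℤ => e (j - k)) ⁻¹' {x | (t ^ k * (g : Perm (Fin 2 × ℕ))) x ≠ x})).Finite := by
      refine Set.Finite.union (Set.Finite.preimage e.injective.injOn hk)
        (Set.Finite.preimage (Function.Injective.injOn fun a b hab => ?_) hk)
      simpa using hab
    obtain ⟨j, hj⟩ := hfin.exists_notMem
    simp only [Set.mem_union, Set.mem_preimage, Set.mem_ofPred_eq, not_or, not_not,
      Perm.mul_apply] at hj
    refine ⟨j, (t ^ k).injective ?_, (t ^ k).injective ?_⟩
    · rw [hj.1, tpow_e]; congr 1; ring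
    · rw [hj.2, tpow_e]; congr 1; ring
  obtain ⟨j, hj1, hj2⟩ := hga
  -- the 3-cycle in N
  set τ : Houghton 2 := ⟨swap (e j) (e (j - k)), (fin_swap _ _).mem⟩ with hτ
  have h3 : g * (τ * g⁻¹ * τ⁻¹) ∈ N := N.mul_mem hg (hN.conj_mem _ (N.inv_mem hg) τ)
  have h3b : ((g * (τ * g⁻¹ * τ⁻¹) : Houghton 2) : Perm (Fin 2 × ℕ)) =
      swap (e (j - k)) (e (j - k - k)) * swap (e j) (e (j - k)) := by
    have : swap (e (j - k)) (e (j - k - k)) =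
        (g : Perm (Fin 2 × ℕ)) * swap (e j) (e (j - k)) * (g : Perm (Fin 2 × ℕ))⁻¹ := by
      rw [← Equiv.swap_apply_apply, hj1, hj2]
    rw [this]
    simp [hτ, mul_assoc]
  obtain ⟨h, hh, ha, hb, hc⟩ := exists_triple (K := Houghton 2) (fun x y => (fin_swap x y).mem)
    (a := e j) (b := e (j - k)) (c := e (j - k - k)) (p := e 0) (q := e 1) (r := e 2)
    (by simp; omega) (by simp; omega) (by simp; omega)
    (by simp) (by simp) (by simp)
  have hcomm : T * S * T⁻¹ * S⁻¹ ∈ N := by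
    have h4 := hN.conj_mem _ h3 ⟨h, hh⟩
    convert h4 using 1
    apply Subtype.ext
    have e1 : ((T * S * T⁻¹ * S⁻¹ : Houghton 2) : Perm (Fin 2 × ℕ)) =
        swap (e 1) (e 2) * swap (e 0) (e 1) := by
      have := conj_s 1
      rw [zpow_one] at this
      have e2 : (1 : ℤ) + 1 = 2 := rfl
      rw [e2] at this
      rw [← this]
      show t * s * t⁻¹ * s⁻¹ = t * s * t⁻¹ * s
      rw [s, swap_inv]
    rw [e1]
    have e3 : ((⟨h, hh⟩ * (g * (τ * g⁻¹ * τ⁻¹)) * ⟨h, hh⟩⁻¹ : Houghton 2) : Perm (Fin 2 × ℕ)) =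
      h * (g * (τ * g⁻¹ * τ⁻¹) : Houghton 2) * h⁻¹ := rfl
    rw [e3, h3b, ← ha, ← hb, ← hc, Equiv.swap_apply_apply, Equiv.swap_apply_apply]
    group
  -- the quotient
  let q := QuotientGroup.mk' N
  have hqST : q T * q S = q S * q T := by
    have : q (T * S * T⁻¹ * S⁻¹) = 1 := (QuotientGroup.eq_one_iff _).2 hcomm
    simp only [map_mul, map_inv] at this
    rw [mul_inv_eq_one, mul_inv_eq_iff_eq_mul] at this
    exact this
  have hS : ∀ x, q x * q S = q S * q x := by
    have := fun x => gen_top (K := (Subgroup.centralizer {q S}).comap q)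
      (by simp [Subgroup.mem_centralizer_iff]) (by simp [Subgroup.mem_centralizer_iff, hqST]) x
    intro x
    have := this x
    simp only [Subgroup.mem_comap, Subgroup.mem_centralizer_iff, Set.mem_singleton_iff,
      forall_eq] at this
    exact this.symm
  have hT : ∀ x, q x * q T = q T * q x := by
    have := fun x => gen_top (K := (Subgroup.centralizer {q T}).comap q)
      (by simp [Subgroup.mem_centralizer_iff, hqST]) (by simp [Subgroup.mem_centralizer_iff]) x
    intro x
    have := this x
    simp only [Subgroup.mem_comap, Subgroup.mem_centralizer_iff, Set.mem_singleton_iff,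
      forall_eq] at this
    exact this.symm
  have hall : ∀ x y, q x * q y = q y * q x := by
    intro x y
    have := gen_top (K := (Subgroup.centralizer {q x}).comap q)
      (by simp [Subgroup.mem_centralizer_iff, hS]) (by simp [Subgroup.mem_centralizer_iff, hT]) y
    simpa only [Subgroup.mem_comap, Subgroup.mem_centralizer_iff, Set.mem_singleton_iff,
      forall_eq] using this
  have hqs : Function.Surjective q := QuotientGroup.mk'_surjective N
  let _ : CommGroup (Houghton 2 ⧸ N) :=
    { (inferInstance : Group (Houghton 2 ⧸ N)) with
      mul_comm := fun a b => by
        obtain ⟨x, rfl⟩ := hqs a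
        obtain ⟨y, rfl⟩ := hqs b
        exact hall x y }
  -- finitary elements square to one
  have hsq : ∀ f : Houghton 2, Finitary (f : Perm (Fin 2 × ℕ)) → q f ^ 2 = 1 := by
    intro f hf
    let K : Subgroup (Houghton 2) := ((powMonoidHom 2).comp q).ker
    have hK : Subgroup.closure {σ : Perm (Fin 2 × ℕ) | σ.IsSwap} ≤
        K.map (Houghton 2).subtype := by
      rw [Subgroup.closure_le]
      rintro _ ⟨x, y, -, rfl⟩
      refine ⟨⟨swap x y, (fin_swap x y).mem⟩, ?_, rfl⟩
      show q _ ^ 2 = 1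
      rw [← map_pow]
      have : (⟨swap x y, (fin_swap x y).mem⟩ : Houghton 2) ^ 2 = 1 :=
        Subtype.ext (by simp [pow_two])
      rw [this, map_one]
    obtain ⟨y, hy, hyf⟩ := hK (fin_mem_closure hf)
    obtain rfl : y = f := Subtype.ext hyf
    exact hy
  have hshift : ∀ (x : Houghton 2) (l : ℤ), Finitary (t ^ l * (x : Perm (Fin 2 × ℕ))) →
      (q T ^ l * q x) ^ 2 = 1 := by
    intro x l hl
    rw [← map_zpow, ← map_mul]
    exact hsq (T ^ l * x) hl
  have hqg : q g = 1 := (QuotientGroup.eq_one_iff _).2 hg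
  have hTk : (q T) ^ (2 * k) = 1 := by
    have := hshift g k hk
    rwa [hqg, mul_one, ← zpow_natCast, ← zpow_mul, mul_comm] at this
  have htors : ∀ a : Houghton 2 ⧸ N, a ^ (2 * k) = 1 := by
    intro a
    obtain ⟨x, rfl⟩ := hqs a
    obtain ⟨l, hl⟩ := exists_shift x.2
    have h5 := hshift x l hl
    have h6 : (q T ^ l * q x) ^ (2 * k) = 1 := by
      rw [zpow_mul]
      have : (q T ^ l * q x) ^ (2 : ℤ) = 1 := by exact_mod_cast h5
      rw [this, one_zpow]
    rw [mul_zpow, ← zpow_mul, mul_comm l, zpow_mul, hTk, one_zpow, one_mul] at h6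
    exact h6
  have hfgq : Group.FG (Houghton 2 ⧸ N) := inferInstance
  have : Finite (Houghton 2 ⧸ N) := by
    apply CommGroup.finite_of_fg_isMulTorsion
    intro a
    rw [isOfFinOrder_iff_pow_eq_one]
    refine ⟨(2 * k).natAbs, by omega, ?_⟩
    rw [pow_natAbs_eq_one]
    exact htors a
  exact Subgroup.finiteIndex_of_finite_quotient

end HoughtonTwo

/-- A nontrivial normal subgroup of `H_2` is finitely generated if and only if it has
finite index. -/
theorem normal_subgroup_H2_fg_iff_finite_index (N : Subgroup ↥(Houghton 2))
    (hN : N.Normal) (hnt : N ≠ ⊥) :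
    Group.FG ↥N ↔ N.FiniteIndex := by
  constructor
  · intro hfg
    obtain ⟨g, hg, hgf⟩ := HoughtonTwo.exists_not_fin N hN hnt hfg
    exact HoughtonTwo.finite_index N hN g hg hgf
  · intro hfi
    exact Subgroup.fg_of_index_ne_zero N
end

section
/- For every n ≥ 1, every nontrivial normal subgroup N of the Houghton group H_n contains every finitely supported even permutation of {1,…,n} × ℕ; that is, N contains the finitary alternating group on {1,…,n} × ℕ. -/
open Equiv in
/-- If a subgroup of permutations is closed under conjugation by swaps and contains one
three-cycle, it contains every product of two swaps with a common point. -/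
lemma hgt_three {α : Type*} [DecidableEq α] (K : Subgroup (Perm α))
    (hK : ∀ a b : α, ∀ g ∈ K, swap a b * g * (swap a b)⁻¹ ∈ K)
    (r s t : α) (hrs : r ≠ s) (hrt : r ≠ t) (hst : s ≠ t)
    (h : swap r s * swap r t ∈ K) (x y z : α) (hxy : x ≠ y) (hxz : x ≠ z) :
    swap x y * swap x z ∈ K := by
  by_cases hyz : y = z
  · subst hyz
    rw [swap_mul_self]
    exact K.one_mem
  have key : ∀ u v a b c : α, swap a b * swap a c ∈ K →
      swap (swap u v a) (swap u v b) * swap (swap u v a) (swap u v c) ∈ K := by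
    intro u v a b c hh
    have := hK u v _ hh
    rw [swap_apply_apply (swap u v), swap_apply_apply (swap u v)]
    simpa [mul_assoc] using this
  have h1 := key r x _ _ _ h
  have e1 : swap r x r = x := swap_apply_left _ _
  have i1 := (swap r x).injective
  have n1 : x ≠ swap r x s := fun hh => hrs (i1 (e1.trans hh))
  have n2 : x ≠ swap r x t := fun hh => hrt (i1 (e1.trans hh))
  have n3 : swap r x s ≠ swap r x t := i1.ne hst
  rw [e1] at h1
  generalize swap r x s = s' at *
  generalize swap r x t = t' at *
  have h2 := key s' y _ _ _ h1
  have e2 : swap s' y s' = y := swap_apply_left _ _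
  have e3 : swap s' y x = x := swap_apply_of_ne_of_ne n1 hxy
  have n4 : x ≠ swap s' y t' := by
    intro hh
    rw [← e3] at hh
    exact n2 ((swap s' y).injective (by rw [← hh, e3]))
  have n5 : y ≠ swap s' y t' := by
    intro hh
    exact n3 ((swap s' y).injective (by rw [e2, ← hh]))
  rw [e2, e3] at h2
  generalize swap s' y t' = t'' at *
  have h3 := key t'' z _ _ _ h2
  rwa [swap_apply_left, swap_apply_of_ne_of_ne n4 hxz, swap_apply_of_ne_of_ne n5 hyz] at h3

open Equiv in
lemma hgt_exists {α : Type*} [DecidableEq α] [Infinite α] (K : Subgroup (Perm α))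
    (hK : ∀ a b : α, ∀ g ∈ K, swap a b * g * (swap a b)⁻¹ ∈ K) (hnt : K ≠ ⊥) :
    ∃ r s t : α, r ≠ s ∧ r ≠ t ∧ s ≠ t ∧ swap r s * swap r t ∈ K := by
  obtain ⟨g, hg, hg1⟩ := K.bot_or_exists_ne_one.resolve_left hnt
  obtain ⟨a, ha⟩ : ∃ a, g a ≠ a := by
    by_contra hh
    push Not at hh
    exact hg1 (Equiv.ext hh)
  obtain ⟨c, hc⟩ := Infinite.exists_notMem_finset ({a, g a, g.symm a} : Finset α)
  simp only [Finset.mem_insert, Finset.mem_singleton, not_or] at hc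
  obtain ⟨hca, hcb, hcg⟩ := hc
  have hgca : g c ≠ a := fun h => hcg (by rw [← h, symm_apply_apply])
  have hgcb : g c ≠ g a := g.injective.ne hca
  have hm : swap (g a) (g c) * swap a c ∈ K := by
    have h1 := K.mul_mem hg (hK a c _ (K.inv_mem hg))
    have : swap (g a) (g c) * swap a c = g * (swap a c * g⁻¹ * (swap a c)⁻¹) := by
      rw [swap_apply_apply g, swap_inv]
      group
    rwa [this]
  by_cases hcc : g c = c
  · refine ⟨c, g a, a, hcb, hca, ha, ?_⟩
    rwa [hcc, swap_comm (g a), swap_comm a] at hm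
  · generalize g a = p at *
    generalize g c = q at *
    obtain ⟨t, ht⟩ := Infinite.exists_notMem_finset ({p, q, a, c} : Finset α)
    simp only [Finset.mem_insert, Finset.mem_singleton, not_or] at ht
    obtain ⟨htp, htq, hta, htc⟩ := ht
    refine ⟨a, c, t, Ne.symm hca, Ne.symm hta, Ne.symm htc, ?_⟩
    have h2 := hK c t _ hm
    have e : swap c t * (swap p q * swap a c) * (swap c t)⁻¹ = swap p q * swap a t := by
      have e1 := swap_apply_apply (swap c t) p q
      have e2 := swap_apply_apply (swap c t) a c
      rw [swap_apply_of_ne_of_ne (Ne.symm hcb) (Ne.symm htp),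
        swap_apply_of_ne_of_ne hcc (Ne.symm htq)] at e1
      rw [swap_apply_of_ne_of_ne (Ne.symm hca) (Ne.symm hta), swap_apply_left] at e2
      rw [e2]
      nth_rewrite 2 [e1]
      group
    rw [e] at h2
    have h3 := K.mul_mem (K.inv_mem hm) h2
    simpa [mul_assoc] using h3

open Equiv in
lemma hgt_list {α : Type*} [DecidableEq α] (K : Subgroup (Perm α))
    (hK : ∀ x y z : α, x ≠ y → x ≠ z → swap x y * swap x z ∈ K) :
    ∀ (k : ℕ) (l : List (Perm α)), l.length = k + k →
      (∀ τ ∈ l, ∃ a b : α, a ≠ b ∧ τ = swap a b) → l.prod ∈ K := by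
  intro k
  induction k with
  | zero =>
    intro l hl _
    have : l = [] := List.length_eq_zero_iff.1 (by omega)
    subst this
    simp
  | succ k ih =>
    intro l hl h
    match l, hl, h with
    | [], hl, _ => simp at hl
    | [_], hl, _ => simp at hl; omega
    | u :: v :: l, hl, h =>
      obtain ⟨a, b, hab, rfl⟩ := h u (by simp)
      obtain ⟨c, d, hcd, rfl⟩ := h v (by simp)
      have h1 : l.prod ∈ K :=
        ih l (by simp at hl; omega) (fun τ hτ => h τ (by simp [hτ]))
      have h2 : swap a b * swap c d ∈ K := by
        by_cases hac : a = c
        · subst hac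
          exact hK a b d hab hcd
        · have := K.mul_mem (hK a b c hab hac) (hK c a d (Ne.symm hac) hcd)
          rw [swap_comm c a] at this
          simpa [mul_assoc] using this
      rw [List.prod_cons, List.prod_cons, ← mul_assoc]
      exact K.mul_mem h2 h1

lemma hgt_swap {n : ℕ} (a b : Fin n × ℕ) : Equiv.swap a b ∈ Houghton n := by
  intro i
  refine ⟨0, a.2 + b.2 + 1, fun x hx => ?_⟩
  rw [Equiv.swap_apply_of_ne_of_ne]
  · simp
  · rintro rfl
    simp at hx
  · rintro rfl
    simp at hx

/-- Every nontrivial normal subgroup of `H_n` contains every finitely supported even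
permutation of `{1,…,n} × ℕ`, i.e. it contains the finitary alternating group. -/
theorem normal_subgroup_contains_finitary_alternating (n : ℕ) (hn : 1 ≤ n)
    (N : Subgroup ↥(Houghton n)) (hN : N.Normal) (hnt : N ≠ ⊥)
    (σ : Equiv.Perm (Fin n × ℕ)) (hfin : {p : Fin n × ℕ | σ p ≠ p}.Finite)
    (heven : ∃ l : List (Equiv.Perm (Fin n × ℕ)),
      (∀ τ ∈ l, ∃ a b : Fin n × ℕ, a ≠ b ∧ τ = Equiv.swap a b) ∧
      l.prod = σ ∧ Even l.length) :
    ∃ hσ : σ ∈ Houghton n, (⟨σ, hσ⟩ : ↥(Houghton n)) ∈ N := by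
  haveI : Nonempty (Fin n) := ⟨⟨0, hn⟩⟩
  have hK : ∀ a b : Fin n × ℕ, ∀ g ∈ N.map (Houghton n).subtype,
      Equiv.swap a b * g * (Equiv.swap a b)⁻¹ ∈ N.map (Houghton n).subtype := by
    rintro a b _ ⟨g, hg, rfl⟩
    exact ⟨_, hN.conj_mem g hg ⟨Equiv.swap a b, hgt_swap a b⟩, rfl⟩
  have hnt' : N.map (Houghton n).subtype ≠ ⊥ := by
    rwa [Ne, Subgroup.map_eq_bot_iff_of_injective _ (Houghton n).subtype_injective]
  obtain ⟨r, s, t, h1, h2, h3, h4⟩ := hgt_exists _ hK hnt'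
  obtain ⟨l, hl, rfl, k, hk⟩ := heven
  obtain ⟨g, hg, hgl⟩ := hgt_list _ (hgt_three _ hK r s t h1 h2 h3 h4) k l hk hl
  rw [← hgl]
  exact ⟨g.2, hg⟩
end
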